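/- arXiv:2512.07106 — 2 statements merged into one kernel-verified Lean document; each statement's English description precedes it below -/
import Mathlib

section
/- Let K be a countably infinite field, let U be a countable K-vector space, and let ρ_U : K* → GL(U) be a diagonalizable representation all of whose weights are nonzero integers. Let Y be a set and let ψ : U → Y be a ρ_U-invariant function (ψ(ρ_U(a)u) = ψ(u) for all a ∈ K*, u ∈ U). Then for every subset E ⊆ U with positive upper Banach density (with respect to the additive group (U,+)) and every finite subset F ⊆ U, there exists u_F ∈ E such that ψ(F) ⊆ ψ(E − u_F). In particular, ψ(E − E) = ψ(U). -/
open Filter Topology Pointwise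
open scoped Classical

/-- A (additive) Følner sequence in a countable abelian group. -/
def IsAddFolner {A : Type*} [AddCommGroup A] (F : ℕ → Finset A) : Prop :=
  (∀ n, (F n).Nonempty) ∧
    ∀ a : A, Tendsto
      (fun n => ((F n ∩ (F n).image (· + a)).card : ℝ) / ((F n).card : ℝ)) atTop (𝓝 1)

/-- `E` has positive upper Banach density: some Følner sequence sees `E` with positive
upper density. -/
def PosUpperBanachDensity {A : Type*} [AddCommGroup A] (E : Set A) : Prop :=
  ∃ F : ℕ → Finset A, IsAddFolner F ∧
    0 < limsup (fun n => (((F n).filter (· ∈ E)).card : ℝ) / ((F n).card : ℝ)) atTop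


/-! Finitely additive means on bounded functions. -/

def Bd {α : Type*} (f : α → ℝ) : Prop := ∃ C, ∀ x, |f x| ≤ C

theorem Bd.add {α : Type*} {f g : α → ℝ} (hf : Bd f) (hg : Bd g) : Bd (fun x => f x + g x) := by
  obtain ⟨C, hC⟩ := hf
  obtain ⟨D, hD⟩ := hg
  exact ⟨C + D, fun x => (abs_add_le _ _).trans (add_le_add (hC x) (hD x))⟩

theorem Bd.mul {α : Type*} {f g : α → ℝ} (hf : Bd f) (hg : Bd g) : Bd (fun x => f x * g x) := by
  obtain ⟨C, hC⟩ := hf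
  obtain ⟨D, hD⟩ := hg
  refine ⟨C * D, fun x => ?_⟩
  rw [abs_mul]
  exact mul_le_mul (hC x) (hD x) (abs_nonneg _) ((abs_nonneg _).trans (hC x))

theorem Bd.const {α : Type*} (c : ℝ) : Bd (fun _ : α => c) := ⟨|c|, fun _ => le_rfl⟩

theorem Bd.cmul {α : Type*} {f : α → ℝ} (c : ℝ) (hf : Bd f) : Bd (fun x => c * f x) :=
  (Bd.const c).mul hf

theorem Bd.neg {α : Type*} {f : α → ℝ} (hf : Bd f) : Bd (fun x => - f x) := by
  obtain ⟨C, hC⟩ := hf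
  exact ⟨C, fun x => by rw [abs_neg]; exact hC x⟩

theorem Bd.sub {α : Type*} {f g : α → ℝ} (hf : Bd f) (hg : Bd g) : Bd (fun x => f x - g x) := by
  simpa [sub_eq_add_neg] using hf.add hg.neg

theorem Bd.comp {α β : Type*} {f : α → ℝ} (hf : Bd f) (t : β → α) : Bd (fun x => f (t x)) := by
  obtain ⟨C, hC⟩ := hf
  exact ⟨C, fun x => hC _⟩

theorem Bd.sum {α ι : Type*} (s : Finset ι) {f : ι → α → ℝ} (hf : ∀ i, Bd (f i)) :
    Bd (fun x => ∑ i ∈ s, f i x) := by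
  induction s using Finset.induction_on with
  | empty => simpa using Bd.const (0 : ℝ)
  | insert a s ha ih => simpa [Finset.sum_insert ha] using (hf a).add ih

theorem bd_ind {α : Type*} (p : α → Prop) : Bd (fun x => if p x then (1 : ℝ) else 0) := by
  refine ⟨1, fun x => ?_⟩
  dsimp only
  split_ifs <;> simp

structure Mean (α : Type*) where
  val : (α → ℝ) → ℝ
  add : ∀ {f g : α → ℝ}, Bd f → Bd g → val (fun x => f x + g x) = val f + val g
  smul : ∀ (c : ℝ) {f : α → ℝ}, Bd f → val (fun x => c * f x) = c * val f
  const : ∀ c : ℝ, val (fun _ => c) = c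
  nonneg : ∀ {f : α → ℝ}, Bd f → (∀ x, 0 ≤ f x) → 0 ≤ val f

namespace Mean

variable {α : Type*} (M : Mean α)

theorem sub {f g : α → ℝ} (hf : Bd f) (hg : Bd g) :
    M.val (fun x => f x - g x) = M.val f - M.val g := by
  have h := M.add hf (hg.cmul (-1))
  rw [M.smul _ hg] at h
  have e : (fun x => f x - g x) = fun x => f x + -1 * g x := by funext x; ring
  rw [e, h]; ring

theorem mono {f g : α → ℝ} (hf : Bd f) (hg : Bd g) (h : ∀ x, f x ≤ g x) :
    M.val f ≤ M.val g := by
  have := M.nonneg (hg.sub hf) (fun x => sub_nonneg.2 (h x))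
  rw [M.sub hg hf] at this
  linarith

theorem sum {ι : Type*} (s : Finset ι) {f : ι → α → ℝ} (hf : ∀ i, Bd (f i)) :
    M.val (fun x => ∑ i ∈ s, f i x) = ∑ i ∈ s, M.val (f i) := by
  induction s using Finset.induction_on with
  | empty => simpa using M.const 0
  | insert a s ha ih =>
    simp only [Finset.sum_insert ha]
    rw [M.add (hf a) (Bd.sum s hf), ih]

theorem abs_le {f : α → ℝ} {C : ℝ} (h : ∀ x, |f x| ≤ C) : |M.val f| ≤ C := by
  have hf : Bd f := ⟨C, h⟩
  rw [_root_.abs_le]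
  constructor
  · have := M.mono (Bd.const (-C)) hf (fun x => (_root_.abs_le.1 (h x)).1)
    rwa [M.const] at this
  · have := M.mono hf (Bd.const C) (fun x => (_root_.abs_le.1 (h x)).2)
    rwa [M.const] at this

theorem bd_val {ι : Type*} (N : ι → Mean α) {f : α → ℝ} (hf : Bd f) : Bd (fun i => (N i).val f) := by
  obtain ⟨C, hC⟩ := hf
  exact ⟨C, fun i => (N i).abs_le hC⟩

/-- averaging means -/
def bind {ι : Type*} (L : Mean ι) (N : ι → Mean α) : Mean α where
  val f := L.val (fun i => (N i).val f)
  add hf hg := by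
    simp only [(N _).add hf hg]
    exact L.add (bd_val N hf) (bd_val N hg)
  smul c f hf := by
    simp only [(N _).smul c hf]
    exact L.smul c (bd_val N hf)
  const c := by simp only [(N _).const, L.const]
  nonneg hf h := L.nonneg (bd_val N hf) (fun i => (N i).nonneg hf h)

def map {β : Type*} (t : α → β) : Mean β where
  val f := M.val (fun x => f (t x))
  add hf hg := M.add (hf.comp t) (hg.comp t)
  smul c _ hf := M.smul c (hf.comp t)
  const c := M.const c
  nonneg hf h := M.nonneg (hf.comp t) (fun _ => h _)

def dirac (a : α) : Mean α where
  val f := f a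
  add _ _ := rfl
  smul _ _ _ := rfl
  const _ := rfl
  nonneg _ h := h a

noncomputable def avg (s : Finset α) (hs : s.Nonempty) : Mean α where
  val f := (∑ x ∈ s, f x) / (s.card : ℝ)
  add _ _ := by rw [Finset.sum_add_distrib, add_div]
  smul c f _ := by rw [← Finset.mul_sum, mul_div_assoc]
  const c := by
    have : (s.card : ℝ) ≠ 0 := by exact_mod_cast hs.card_pos.ne'
    rw [Finset.sum_const, nsmul_eq_mul]; field_simp
  nonneg _ h := div_nonneg (Finset.sum_nonneg fun x _ => h x) (Nat.cast_nonneg _)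

theorem tendsto_limUnder_ultra {ι : Type*} (𝒰 : Ultrafilter ι) {f : ι → ℝ} (hf : Bd f) :
    Tendsto f 𝒰 (𝓝 (limUnder (𝒰 : Filter ι) f)) := by
  obtain ⟨C, hC⟩ := hf
  have hc : IsCompact (Set.Icc (-C) C) := isCompact_Icc
  obtain ⟨x, _, hx⟩ := hc.ultrafilter_le_nhds (𝒰.map f) (by
    rw [Ultrafilter.coe_map, le_principal_iff]
    exact Filter.mem_map.2 (Filter.univ_mem' fun i => _root_.abs_le.1 (hC i)))
  exact tendsto_nhds_limUnder ⟨x, hx⟩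

noncomputable def ultra {ι : Type*} (𝒰 : Ultrafilter ι) : Mean ι where
  val f := limUnder (𝒰 : Filter ι) f
  add hf hg := ((tendsto_limUnder_ultra 𝒰 hf).add (tendsto_limUnder_ultra 𝒰 hg)).limUnder_eq
  smul c _ hf := ((tendsto_limUnder_ultra 𝒰 hf).const_mul c).limUnder_eq
  const c := (tendsto_const_nhds (x := c) (f := (𝒰 : Filter ι))).limUnder_eq
  nonneg hf h := ge_of_tendsto' (tendsto_limUnder_ultra 𝒰 hf) h

theorem ultra_congr {ι : Type*} (𝒰 : Ultrafilter ι) {f g : ι → ℝ} (hf : Bd f) (hg : Bd g)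
    (h : Tendsto (fun i => f i - g i) 𝒰 (𝓝 0)) : (ultra 𝒰).val f = (ultra 𝒰).val g := by
  have h1 := (tendsto_limUnder_ultra 𝒰 hf).sub (tendsto_limUnder_ultra 𝒰 hg)
  have := tendsto_nhds_unique h h1
  change limUnder _ f = limUnder _ g
  linarith

/-- Invariance under a self map. -/
def Inv (M : Mean α) (t : α → α) : Prop := ∀ f : α → ℝ, Bd f → M.val (fun x => f (t x)) = M.val f

theorem exists_inv_step (t : α → α) :
    ∃ N : Mean α, N.Inv t ∧ ∀ s : α → α, (∀ x, s (t x) = t (s x)) → M.Inv s → N.Inv s := by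
  let 𝒰 : Ultrafilter ℕ := Ultrafilter.of atTop
  have h𝒰 : (𝒰 : Filter ℕ) ≤ atTop := Ultrafilter.of_le _
  let A : ℕ → Mean α := fun n =>
    (avg (Finset.range (n+1)) (by simp)).bind (fun k => M.map (t^[k]))
  have hA : ∀ n f, (A n).val f = (∑ k ∈ Finset.range (n+1), M.val (fun x => f (t^[k] x))) / ((n:ℝ)+1) := by
    intro n f
    simp [A, bind, avg, map]
  refine ⟨(ultra 𝒰).bind A, ?_, ?_⟩
  · intro f hf
    apply ultra_congr 𝒰 (bd_val A (hf.comp t)) (bd_val A hf)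
    obtain ⟨C, hC⟩ := hf
    refine Tendsto.mono_left ?_ h𝒰
    have hlim : Tendsto (fun n : ℕ => 2 * C * (1 / ((n:ℝ)+1))) atTop (𝓝 0) := by
      simpa using tendsto_one_div_add_atTop_nhds_zero_nat.const_mul (2 * C)
    refine squeeze_zero_norm (fun n => ?_) hlim
    rw [hA, hA, ← sub_div]
    have e : ∀ k, M.val (fun x => f (t (t^[k] x))) = M.val (fun x => f (t^[k+1] x)) := by
      intro k; simp only [Function.iterate_succ_apply']
    simp only [e]
    rw [← Finset.sum_sub_distrib, Finset.sum_range_sub (fun k => M.val (fun x => f (t^[k] x))),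
      Real.norm_eq_abs, abs_div, abs_of_pos (by positivity : (0:ℝ) < n + 1), div_eq_mul_one_div]
    gcongr
    have h1 := M.abs_le (f := fun x => f (t^[n+1] x)) (fun x => hC _)
    have h2 := M.abs_le (f := fun x => f (t^[0] x)) (fun x => hC _)
    rw [_root_.abs_le] at *
    constructor <;> linarith [h1.1, h1.2, h2.1, h2.2]
  · intro s hst hs f hf
    change (ultra 𝒰).val _ = (ultra 𝒰).val _
    congr 1
    funext n
    rw [hA, hA]
    congr 1
    refine Finset.sum_congr rfl fun k _ => ?_
    have hc : Function.Commute s t := hst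
    rw [← hs _ (hf.comp (t^[k]))]
    congr 1
    funext x
    rw [(hc.iterate_right k).eq]

theorem exists_inv {S : Type*} [Nonempty α] (T : S → α → α)
    (hT : ∀ s s' x, T s (T s' x) = T s' (T s x)) : ∃ N : Mean α, ∀ s, N.Inv (T s) := by
  have hfin : ∀ F : Finset S, ∃ N : Mean α, ∀ s ∈ F, N.Inv (T s) := by
    intro F
    induction F using Finset.induction_on with
    | empty => exact ⟨dirac (Classical.arbitrary α), by simp⟩
    | insert a F ha ih =>
      obtain ⟨N, hN⟩ := ih
      obtain ⟨N', h1, h2⟩ := N.exists_inv_step (T a)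
      refine ⟨N', fun s hs => ?_⟩
      rcases Finset.mem_insert.1 hs with rfl | hs
      · exact h1
      · exact h2 _ (hT s a) (hN s hs)
  choose N hN using hfin
  let 𝒰 : Ultrafilter (Finset S) := Ultrafilter.of atTop
  have h𝒰 : (𝒰 : Filter (Finset S)) ≤ atTop := Ultrafilter.of_le _
  refine ⟨(ultra 𝒰).bind N, fun s f hf => ?_⟩
  apply ultra_congr 𝒰 (bd_val N (hf.comp _)) (bd_val N hf)
  refine Tendsto.mono_left ?_ h𝒰
  refine tendsto_const_nhds.congr' ?_
  filter_upwards [eventually_ge_atTop {s}] with F hF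
  rw [hN F s (hF (Finset.mem_singleton_self s)) f hf, sub_self]

end Mean

/-- a mean on a field invariant under the affine group -/
structure AffInv {K : Type*} [Field K] (M : Mean K) : Prop where
  trans : ∀ a : K, M.Inv (fun x => x + a)
  dil : ∀ a : Kˣ, M.Inv (fun x => (a : K) * x)

theorem exists_affInv (K : Type*) [Field K] : ∃ M : Mean K, AffInv M := by
  obtain ⟨N, hN⟩ := Mean.exists_inv (S := K) (α := K) (fun a x => x + a) (fun a b x => by ring)
  obtain ⟨L, hL⟩ := Mean.exists_inv (S := Kˣ) (α := Kˣ) (fun a x => x * a)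
    (fun a b x => by rw [mul_assoc, mul_comm b a, mul_assoc])
  refine ⟨L.bind (fun a => N.map (fun x => (a : K) * x)), ⟨?_, ?_⟩⟩
  · intro t f hf
    change L.val _ = L.val _
    congr 1
    funext a
    have h := hN ((a : K)⁻¹ * t) _ (hf.comp (fun x => (a : K) * x))
    simpa [Mean.map, mul_add] using h
  · intro t f hf
    have h := hL t _ (Mean.bd_val (fun a : Kˣ => N.map (fun x => (a : K) * x)) hf)
    refine Eq.trans ?_ h
    change L.val _ = L.val _
    congr 1
    funext a
    simp [Mean.map, mul_comm (a : K), mul_assoc]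

theorem AffInv.point {K : Type*} [Field K] [Infinite K] {M : Mean K} (hM : AffInv M) (p : K) :
    M.val (fun x => if x = p then 1 else 0) = 0 := by
  have hb : ∀ p : K, Bd (fun x : K => if x = p then (1 : ℝ) else 0) := fun p => bd_ind _
  have hsame : ∀ q : K, M.val (fun x => if x = q then 1 else 0)
      = M.val (fun x => if x = p then 1 else 0) := by
    intro q
    rw [← hM.trans (p - q) _ (hb p)]
    congr 1
    funext x
    have : x + (p - q) = p ↔ x = q := by
      constructor
      · intro h; linear_combination h
      · rintro rfl; ring
    simp [this]
  have h0 : 0 ≤ M.val (fun x => if x = p then 1 else 0) :=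
    M.nonneg (hb p) (fun x => by split_ifs <;> simp)
  by_contra hne
  have hpos := lt_of_le_of_ne h0 (Ne.symm hne)
  obtain ⟨n, hn⟩ := exists_nat_gt (1 / M.val (fun x => if x = p then 1 else 0))
  obtain ⟨s, hs⟩ := Infinite.exists_subset_card_eq K n
  have h1 := M.sum s (f := fun q x => if x = q then (1 : ℝ) else 0) hb
  simp only [hsame] at h1
  have h2 : M.val (fun x => ∑ i ∈ s, if x = i then (1 : ℝ) else 0) ≤ 1 := by
    refine (M.mono (Bd.sum s hb) (Bd.const 1) (fun x => ?_)).trans_eq (M.const 1)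
    rw [Finset.sum_ite_eq]
    split_ifs <;> simp
  rw [h1, Finset.sum_const, hs, nsmul_eq_mul] at h2
  rw [div_lt_iff₀ hpos] at hn
  linarith

theorem AffInv.zero_of_cofinite {K : Type*} [Field K] [Infinite K] {M : Mean K} (hM : AffInv M)
    {f : K → ℝ} (hf : Bd f) (h : ∀ᶠ x in cofinite, f x = 0) : M.val f = 0 := by
  have hfin : {x | ¬ f x = 0}.Finite := h
  have hb : ∀ p : K, Bd (fun x : K => f p * if x = p then (1 : ℝ) else 0) := fun p =>
    Bd.cmul _ (bd_ind _)
  have e : f = fun x => ∑ p ∈ hfin.toFinset, f p * if x = p then (1 : ℝ) else 0 := by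
    funext x
    simp only [mul_ite, mul_one, mul_zero]
    rw [Finset.sum_ite_eq]
    split_ifs with hx
    · rfl
    · simpa using hx
  rw [e, M.sum _ hb]
  refine Finset.sum_eq_zero fun p _ => ?_
  rw [M.smul _ (bd_ind _), hM.point, mul_zero]

theorem AffInv.congr_cofinite {K : Type*} [Field K] [Infinite K] {M : Mean K} (hM : AffInv M)
    {f g : K → ℝ} (hf : Bd f) (hg : Bd g) (h : ∀ᶠ x in cofinite, f x = g x) :
    M.val f = M.val g := by
  have := hM.zero_of_cofinite (hf.sub hg) (h.mono fun x hx => sub_eq_zero.2 hx)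
  rw [M.sub hf hg] at this
  linarith


/-! Positive definite functions. -/

structure PD {G : Type*} [AddCommGroup G] (φ : G → ℝ) : Prop where
  even : ∀ x, φ (-x) = φ x
  psd : ∀ (ι : Type) [Fintype ι] (c : ι → ℝ) (x : ι → G),
    0 ≤ ∑ i, ∑ j, c i * c j * φ (x i - x j)

namespace PD

variable {G : Type*} [AddCommGroup G] {φ : G → ℝ}

theorem zero_nonneg (h : PD φ) : 0 ≤ φ 0 := by
  simpa using h.psd Unit (fun _ => 1) (fun _ => 0)

theorem abs_le (h : PD φ) (x : G) : |φ x| ≤ φ 0 := by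
  have h1 := h.psd Bool (fun _ => 1) (fun b => if b then x else 0)
  have h2 := h.psd Bool (fun b => if b then 1 else -1) (fun b => if b then x else 0)
  have he := h.even x
  simp at h1 h2
  rw [_root_.abs_le]
  constructor <;> linarith

theorem bd (h : PD φ) : Bd φ := ⟨φ 0, h.abs_le⟩

theorem comp {H : Type*} [AddCommGroup H] (h : PD φ) (t : H →+ G) : PD (fun x => φ (t x)) where
  even x := by simp [h.even]
  psd ι _ c x := by simpa using h.psd ι c (fun i => t (x i))

theorem mean {α : Type*} (M : Mean α) {ψ : α → G → ℝ} (h : ∀ a, PD (ψ a))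
    (hb : ∀ x, Bd (fun a => ψ a x)) : PD (fun x => M.val (fun a => ψ a x)) where
  even x := by simp [(h _).even]
  psd ι _ c x := by
    have := M.nonneg (f := fun a => ∑ i, ∑ j, c i * c j * ψ a (x i - x j))
      (Bd.sum _ fun i => Bd.sum _ fun j => (hb _).cmul _) (fun a => (h a).psd ι c x)
    rw [M.sum _ (fun i => Bd.sum _ fun j => (hb _).cmul _)] at this
    refine this.trans_eq (Finset.sum_congr rfl fun i _ => ?_)
    rw [M.sum _ (fun j => (hb _).cmul _)]
    exact Finset.sum_congr rfl fun j _ => M.smul _ (hb _)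

end PD

section affine

variable {K : Type*} [Field K] [Infinite K] {M : Mean K}

theorem AffInv.dil' (hM : AffInv M) {f : K → ℝ} (hf : Bd f) {c : K} (hc : c ≠ 0) :
    M.val (fun b => f (c * b)) = M.val f := hM.dil (Units.mk0 c hc) f hf

/-- the mean of a positive definite function on the field is nonnegative -/
theorem AffInv.mean_nonneg (hM : AffInv M) {g : K → ℝ} (hg : PD g) : 0 ≤ M.val g := by
  obtain s := Infinite.natEmbedding K
  have key : ∀ n : ℕ, 0 ≤ g 0 + n * M.val g := by
    intro n
    have hb : ∀ i j : Fin (n+1), Bd (fun b => g ((s i - s j) * b)) := fun i j => hg.bd.comp _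
    have h := M.nonneg (f := fun b => ∑ i : Fin (n+1), ∑ j : Fin (n+1), g ((s i - s j) * b))
      (Bd.sum _ fun i => Bd.sum _ fun j => hb i j) (fun b => by
        have := hg.psd (Fin (n+1)) (fun _ => 1) (fun i => s i * b)
        simpa [sub_mul] using this)
    rw [M.sum _ (fun i => Bd.sum _ fun j => hb i j)] at h
    have e : ∀ i : Fin (n+1), M.val (fun b => ∑ j : Fin (n+1), g ((s i - s j) * b))
        = g 0 + n * M.val g := by
      intro i
      rw [M.sum _ (fun j => hb i j), ← Finset.add_sum_erase _ _ (Finset.mem_univ i)]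
      congr 1
      · simp [M.const]
      · rw [Finset.sum_congr rfl (g := fun _ => M.val g)]
        · simp
        · intro j hj
          refine hM.dil' hg.bd (sub_ne_zero.2 fun h => ?_)
          exact (Finset.ne_of_mem_erase hj) (Fin.ext (s.injective h)).symm
    simp only [e, Finset.sum_const, nsmul_eq_mul] at h
    simp only [Finset.card_univ, Fintype.card_fin] at h
    exact nonneg_of_mul_nonneg_right h (by positivity)
  by_contra hneg
  push Not at hneg
  obtain ⟨n, hn⟩ := exists_nat_gt (g 0 / (- M.val g))
  rw [div_lt_iff₀ (by linarith)] at hn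
  have := key n
  linarith

variable {G : Type*} [AddCommGroup G] {φ : G → ℝ}

theorem PD.line (h : PD φ) (t : K →+ G) {ι : Type} [Fintype ι] (c : ι → ℝ) (x : ι → G) :
    PD (fun b => ∑ i, ∑ j, c i * c j * φ (x i - x j + t b)) where
  even b := by
    rw [Finset.sum_comm]
    refine Finset.sum_congr rfl fun i _ => Finset.sum_congr rfl fun j _ => ?_
    rw [← h.even, mul_comm (c j)]
    congr 2
    simp only [map_neg]
    abel
  psd κ _ d y := by
    have := h.psd (κ × ι) (fun q => d q.1 * c q.2) (fun q => x q.2 + t (y q.1))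
    refine this.trans_eq ?_
    simp only [Fintype.sum_prod_type, Finset.mul_sum]
    refine Finset.sum_congr rfl fun k _ => ?_
    rw [Finset.sum_comm]
    refine Finset.sum_congr rfl fun k' _ => Finset.sum_congr rfl fun i _ =>
      Finset.sum_congr rfl fun j _ => ?_
    rw [map_sub]
    have : x i + t (y k) - (x j + t (y k')) = x i - x j + (t (y k) - t (y k')) := by abel
    rw [this]; ring

theorem PD.line_mean (h : PD φ) (t : K →+ G) {ι : Type} [Fintype ι] (c : ι → ℝ) (x : ι → G) :
    M.val (fun b => ∑ i, ∑ j, c i * c j * φ (x i - x j + t b))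
      = ∑ i, ∑ j, c i * c j * M.val (fun b => φ (x i - x j + t b)) := by
  have hb : ∀ y, Bd (fun b => φ (y + t b)) := fun y => h.bd.comp _
  rw [M.sum _ (fun i => Bd.sum _ fun j => (hb _).cmul _)]
  refine Finset.sum_congr rfl fun i _ => ?_
  rw [M.sum _ (fun j => (hb _).cmul _)]
  exact Finset.sum_congr rfl fun j _ => M.smul _ (hb _)

theorem PD.line_even (h : PD φ) (hM : AffInv M) (t : K →+ G) (x : G) :
    M.val (fun b => φ (-x + t b)) = M.val (fun b => φ (x + t b)) := by
  rw [← hM.dil' (f := fun b => φ (-x + t b)) (h.bd.comp _) (c := -1) (by simp)]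
  congr 1
  funext b
  rw [← h.even]
  congr 1
  simp only [neg_mul, one_mul, map_neg]
  abel

theorem PD.inv_part (h : PD φ) (hM : AffInv M) (t : K →+ G) :
    PD (fun x => M.val (fun b => φ (x + t b))) where
  even x := h.line_even hM t x
  psd ι _ c x := by
    rw [← h.line_mean]
    exact hM.mean_nonneg (h.line t c x)

theorem PD.free_part (h : PD φ) (hM : AffInv M) (t : K →+ G) :
    PD (fun x => φ x - M.val (fun b => φ (x + t b))) where
  even x := by rw [h.even, h.line_even hM t x]
  psd ι _ c x := by
    have h1 := M.mono (h.line t c x).bd (Bd.const _) (fun b => (le_abs_self _).trans ((h.line t c x).abs_le b))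
    rw [M.const, h.line_mean] at h1
    simp only [map_zero, add_zero] at h1
    simp only [mul_sub, Finset.sum_sub_distrib]
    linarith

/-- van der Corput type lemma -/
theorem PD.vdc (h : PD φ) {Q : ℕ → K → G} {A : ℝ}
    (hQ : ∀ k, M.val (fun b => φ (Q k b)) = A)
    (hQQ : ∀ k k', k ≠ k' → M.val (fun b => φ (Q k b - Q k' b)) = 0) : A = 0 := by
  have hb : ∀ q : K → G, Bd (fun b => φ (q b)) := fun q => h.bd.comp q
  have key : ∀ (n : ℕ) (y : ℝ), 0 ≤ φ 0 + n * (2 * y * A) + n * (y ^ 2 * φ 0) := by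
    intro n y
    have b1 : ∀ i : Fin n, Bd (fun b => 2 * y * φ (Q i b)) := fun i => (hb _).cmul _
    have b2 : ∀ i j : Fin n, Bd (fun b => y ^ 2 * φ (Q i b - Q j b)) := fun i j =>
      (hb (fun b => Q i b - Q j b)).cmul _
    have b3 : ∀ i : Fin n, Bd (fun b => ∑ j : Fin n, y ^ 2 * φ (Q i b - Q j b)) := fun i =>
      Bd.sum _ (b2 i)
    have h0 := M.nonneg (f := fun b => φ 0 + ∑ i : Fin n, 2 * y * φ (Q i b)
        + ∑ i : Fin n, ∑ j : Fin n, y ^ 2 * φ (Q i b - Q j b))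
      (((Bd.const _).add (Bd.sum _ b1)).add (Bd.sum _ b3)) (fun b => by
        refine (h.psd (Option (Fin n)) (fun o => o.elim 1 (fun _ => y))
          (fun o => o.elim 0 (fun i => Q i b))).trans_eq ?_
        simp only [Fintype.sum_option, Option.elim, sub_zero, zero_sub, h.even,
          Finset.sum_add_distrib]
        simp only [one_mul, mul_one, ← Finset.mul_sum]
        ring)
    rw [M.add ((Bd.const _).add (Bd.sum _ b1)) (Bd.sum _ b3),
      M.add (Bd.const _) (Bd.sum _ b1), M.const, M.sum _ b1, M.sum _ b3] at h0
    have e1 : ∀ i : Fin n, M.val (fun b => 2 * y * φ (Q i b)) = 2 * y * A := fun i => by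
      rw [M.smul _ (hb _), hQ]
    have e2 : ∀ i : Fin n, M.val (fun b => ∑ j : Fin n, y ^ 2 * φ (Q i b - Q j b))
        = y ^ 2 * φ 0 := by
      intro i
      rw [M.sum _ (b2 i), Finset.sum_eq_single i]
      · simp [M.const]
      · intro j _ hj
        rw [M.smul _ (hb (fun b => Q i b - Q j b)), hQQ _ _ (fun h => hj (Fin.ext h).symm), mul_zero]
      · simp
    simp only [e1, e2, Finset.sum_const, nsmul_eq_mul, Finset.card_univ, Fintype.card_fin] at h0
    exact h0
  by_contra hA
  have hA2 : 0 < A ^ 2 := by positivity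
  have hz := h.zero_nonneg
  have hA' : |A| ≤ φ 0 := by
    rw [← hQ 0]; exact M.abs_le (fun b => h.abs_le _)
  have hpos : 0 < φ 0 := (abs_pos.2 hA).trans_le hA'
  obtain ⟨n, hn⟩ := exists_nat_gt (φ 0 ^ 2 / A ^ 2)
  rw [div_lt_iff₀ hA2] at hn
  have := key n (- A / φ 0)
  have e : φ 0 + n * (2 * (- A / φ 0) * A) + n * ((- A / φ 0) ^ 2 * φ 0)
      = (φ 0 ^ 2 - n * A ^ 2) / φ 0 := by field_simp; ring
  rw [e] at this
  have h3 : (φ 0 ^ 2 - n * A ^ 2) / φ 0 < 0 := div_neg_of_neg_of_pos (by linarith) hpos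
  linarith

end affine


/-! Weighted actions on coordinate spaces. -/

section weights

variable {K : Type*} [Field K] [Infinite K] {ι : Type*}

theorem exists_units_seq {e : ℤ} (he : e ≠ 0) :
    ∃ μ : ℕ → Kˣ, ∀ k k', k ≠ k' → μ k ^ e ≠ μ k' ^ e := by
  have hinf : Infinite Kˣ := by
    have : Infinite {x : K // x ≠ 0} := (Set.finite_singleton (0 : K)).infinite_compl.to_subtype
    exact Infinite.of_injective (fun x : {x : K // x ≠ 0} => Units.mk0 x.1 x.2) (fun x y h => by
      have := congrArg Units.val h
      exact Subtype.ext (by simpa using this))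
  have hr : (Set.range (fun x : Kˣ => x ^ e)).Infinite := by
    intro hfin
    have hfib : ∀ y : Kˣ, {x : Kˣ | x ^ e = y}.Finite := by
      intro y
      have hn : 0 < e.natAbs := Int.natAbs_pos.2 he
      have : ∀ z : Kˣ, {x : Kˣ | x ^ e.natAbs = z}.Finite := by
        intro z
        refine Set.Finite.subset (Set.Finite.preimage (f := fun x : Kˣ => (x : K))
          (Units.val_injective.injOn) (Polynomial.nthRoots e.natAbs (z : K)).toFinset.finite_toSet) ?_
        intro x hx
        have hx : x ^ e.natAbs = z := hx
        simp only [Set.mem_preimage, Finset.mem_coe, Multiset.mem_toFinset]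
        rw [Polynomial.mem_nthRoots hn, ← hx]
        simp
      refine ((this y).union (this y⁻¹)).subset ?_
      intro x hx
      have hx : x ^ e = y := hx
      rcases Int.natAbs_eq e with h | h
      · left
        change x ^ e.natAbs = y
        have h2 : x ^ e = x ^ (e.natAbs : ℤ) := congrArg _ h
        rw [← hx, h2, zpow_natCast]
      · right
        change x ^ e.natAbs = y⁻¹
        have h2 : x ^ e = x ^ (-(e.natAbs : ℤ)) := congrArg _ h
        rw [← hx, h2, zpow_neg, zpow_natCast, inv_inv]
    have : (Set.univ : Set Kˣ).Finite := by
      refine (hfin.biUnion (fun y _ => hfib y)).subset ?_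
      intro x _
      exact Set.mem_biUnion ⟨x, rfl⟩ rfl
    exact Set.infinite_univ this
  let g := hr.natEmbedding
  choose μ hμ using fun k => (g k).2
  refine ⟨μ, fun k k' hk h => hk ?_⟩
  apply g.injective
  apply Subtype.ext
  rw [← hμ k, ← hμ k']
  exact h

/-- the diagonal action with weights `l` -/
def wact (l : ι → ℤ) (a : Kˣ) (x : ι → K) : ι → K := fun i => ((a ^ l i : Kˣ) : K) * x i

noncomputable def poly (J : Finset (ι × ℕ)) (c : ι × ℕ → K) (b : K) : ι → K :=
  fun i => ∑ q ∈ J, if q.1 = i then c q * b ^ q.2 else 0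

def tw (l : ι → ℤ) (q : ι × ℕ) (μ : Kˣ) (R : K → ι → K) (b : K) : ι → K :=
  wact l (μ ^ (-(q.2 : ℤ))) (R (((μ ^ l q.1 : Kˣ) : K) * b))

theorem tw_add (l : ι → ℤ) (q : ι × ℕ) (μ : Kˣ) (R S : K → ι → K) (b : K) :
    tw l q μ (fun b => R b + S b) b = tw l q μ R b + tw l q μ S b := by
  funext i
  simp [tw, wact, mul_add]

theorem tw_poly (l : ι → ℤ) (q : ι × ℕ) (μ : Kˣ) (J : Finset (ι × ℕ)) (c : ι × ℕ → K) (b : K) :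
    tw l q μ (poly J c) b
      = poly J (fun q' => ((μ ^ (l q.1 * q'.2 - q.2 * l q'.1) : Kˣ) : K) * c q') b := by
  funext i
  simp only [tw, wact, poly, Finset.mul_sum]
  refine Finset.sum_congr rfl fun q' _ => ?_
  split_ifs with h
  · subst h
    have : (μ ^ (l q.1 * q'.2 - q.2 * l q'.1) : Kˣ)
        = (μ ^ (-(q.2 : ℤ))) ^ l q'.1 * (μ ^ l q.1) ^ q'.2 := by
      rw [← zpow_mul, ← zpow_natCast, ← zpow_mul, ← zpow_add]
      congr 1
      ring
    rw [this]
    push_cast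
    ring
  · simp

theorem poly_sub_erase (J : Finset (ι × ℕ)) (c c' : ι × ℕ → K) (q : ι × ℕ) (h : c q = c' q)
    (b : K) : poly J c b - poly J c' b = poly (J.erase q) (fun q' => c q' - c' q') b := by
  funext i
  simp only [poly, Pi.sub_apply]
  rw [← Finset.sum_sub_distrib]
  rw [← Finset.sum_erase J (a := q)]
  · refine Finset.sum_congr rfl fun q' _ => ?_
    split_ifs <;> ring
  · split_ifs
    · rw [h, sub_self]
    · simp

variable {M : Mean K} {φ : (ι → K) → ℝ} {l : ι → ℤ}

theorem kill (hM : AffInv M) (h : PD φ) (hinv : ∀ a x, φ (wact l a x) = φ x) (i1 : ι)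
    (𝓡 : Set (K → ι → K)) (h0 : ∀ R ∈ 𝓡, M.val (fun b => φ (R b)) = 0) (n : ℕ) :
    ∀ J : Finset (ι × ℕ), J.card = n → (∀ q ∈ J, l q.1 - q.2 * l i1 ≠ 0) →
    (∀ q ∈ J, ∀ R ∈ 𝓡, ∀ μ μ' : Kˣ, μ ^ (l q.1 - q.2 * l i1) ≠ μ' ^ (l q.1 - q.2 * l i1) →
      (fun b => tw l q μ R b - tw l q μ' R b) ∈ 𝓡) →
    ∀ c, ∀ R ∈ 𝓡, M.val (fun b => φ (poly J c b + R b)) = 0 := by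
  induction n with
  | zero =>
    intro J hJ _ _ c R hR
    rw [Finset.card_eq_zero] at hJ
    subst hJ
    have : ∀ b, poly (∅ : Finset (ι × ℕ)) c b + R b = R b := by
      intro b; funext i; simp [poly]
    simp only [this]
    exact h0 R hR
  | succ n ih =>
    intro J hJ he hcl c R hR
    obtain ⟨q, hq⟩ : J.Nonempty := Finset.card_pos.1 (by omega)
    obtain ⟨μ, hμ⟩ := exists_units_seq (K := K) (he q hq)
    refine h.vdc (M := M) (Q := fun k => tw l q (μ k) (fun b => poly J c b + R b)) ?_ ?_
    · intro k
      simp only [tw, hinv]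
      exact hM.dil' (f := fun b => φ (poly J c b + R b)) (h.bd.comp _) (Units.ne_zero _)
    · intro k k' hk
      have := ih (J.erase q) (by rw [Finset.card_erase_of_mem hq, hJ]; rfl)
        (fun q' hq' => he q' (Finset.mem_of_mem_erase hq'))
        (fun q' hq' => hcl q' (Finset.mem_of_mem_erase hq'))
        (fun q' => ((μ k ^ (l q.1 * q'.2 - q.2 * l q'.1) : Kˣ) : K) * c q'
          - ((μ k' ^ (l q.1 * q'.2 - q.2 * l q'.1) : Kˣ) : K) * c q') _
        (hcl q hq R hR (μ k) (μ k') (hμ k k' hk))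
      rw [← this]
      congr 1
      funext b
      congr 1
      rw [tw_add, tw_add, add_sub_add_comm]
      congr 1
      have e1 := tw_poly l q (μ k) J c b
      have e2 := tw_poly l q (μ k') J c b
      change tw l q (μ k) (poly J c) b - tw l q (μ k') (poly J c) b = _
      rw [e1, e2]
      refine poly_sub_erase J _ _ q ?_ b
      have : l q.1 * q.2 - q.2 * l q.1 = 0 := by ring
      simp only [this, zpow_zero]

/-- the set of pairs `(i, j)` with `i ∈ s`, `j ≤ |l i|` -/
noncomputable def pairs (s : Finset ι) (l : ι → ℤ) : Finset (ι × ℕ) :=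
  s.biUnion (fun i => (Finset.range ((l i).natAbs + 1)).image (fun j => (i, j)))

theorem mem_pairs (s : Finset ι) (l : ι → ℤ) (q : ι × ℕ) :
    q ∈ pairs s l ↔ q.1 ∈ s ∧ q.2 ≤ (l q.1).natAbs := by
  obtain ⟨i, j⟩ := q
  simp only [pairs, Finset.mem_biUnion, Finset.mem_image, Finset.mem_range, Prod.mk.injEq]
  constructor
  · rintro ⟨i', hi', j', hj', rfl, rfl⟩
    exact ⟨hi', by omega⟩
  · rintro ⟨h1, h2⟩
    exact ⟨i, h1, j, by omega, rfl, rfl⟩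

def binc (l : ι → ℤ) (x : ι → K) (q : ι × ℕ) : K := ((l q.1).natAbs.choose q.2 : K) * x q.1

theorem poly_pairs (s : Finset ι) (l : ι → ℤ) (x : ι → K) (b : K) (i : ι) :
    poly (pairs s l) (binc l x) b i = if i ∈ s then (1 + b) ^ (l i).natAbs * x i else 0 := by
  unfold poly
  rw [← Finset.sum_filter]
  split_ifs with hi
  · rw [add_comm (1 : K) b, add_pow, Finset.sum_mul]
    symm
    refine Finset.sum_bij (fun j _ => (i, j)) ?_ ?_ ?_ ?_
    · intro j hj
      rw [Finset.mem_filter, mem_pairs]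
      exact ⟨⟨hi, by simpa [Nat.lt_succ_iff] using hj⟩, rfl⟩
    · intro j _ j' _ h
      exact (Prod.mk.inj h).2
    · rintro ⟨i', j⟩ hq
      rw [Finset.mem_filter, mem_pairs] at hq
      obtain ⟨⟨_, h2⟩, h3⟩ := hq
      simp only at h2 h3
      subst h3
      exact ⟨j, by simpa [Nat.lt_succ_iff] using h2, rfl⟩
    · intro j _
      simp only [binc, one_pow, mul_one]
      ring
  · refine Finset.sum_eq_zero fun q hq => ?_
    rw [Finset.mem_filter, mem_pairs] at hq
    exact absurd (hq.2 ▸ hq.1.1) hi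

theorem poly_erase (J : Finset (ι × ℕ)) (c : ι × ℕ → K) (q : ι × ℕ) (hq : q ∈ J) (b : K) :
    poly J c b = poly (J.erase q) c b + Pi.single q.1 (c q * b ^ q.2) := by
  funext i
  simp only [poly, Pi.add_apply]
  rw [← Finset.sum_erase_add J _ hq]
  congr 1
  by_cases h : q.1 = i
  · subst h; simp
  · rw [if_neg h, Pi.single_eq_of_ne (Ne.symm h)]

variable [Fintype ι]

/-- vanishing, all weights in the support positive -/
theorem vanish_pos (hM : AffInv M) (h : PD φ) (hinv : ∀ a x, φ (wact l a x) = φ x)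
    (hl : Function.Injective l) (hl0 : ∀ i, (l i : K) ≠ 0) (i1 : ι)
    (hfree : M.val (fun b => φ (Pi.single i1 b)) = 0) (x : ι → K) (hx1 : x i1 ≠ 0)
    (hpos : ∀ i, x i ≠ 0 → 0 < l i ∧ l i ≤ l i1) : φ x = 0 := by
  have hp1 := (hpos i1 hx1).1
  let s : Finset ι := Finset.univ.filter (fun i => x i ≠ 0)
  have hs : ∀ i, i ∈ s ↔ x i ≠ 0 := fun i => by simp [s]
  have hq1 : ((i1, 1) : ι × ℕ) ∈ pairs s l := by
    rw [mem_pairs]; exact ⟨(hs _).2 hx1, by simp only; omega⟩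
  let 𝓡 : Set (K → ι → K) := {R | ∃ C : K, C ≠ 0 ∧ R = fun b => Pi.single i1 (C * b)}
  have key := kill hM h hinv i1 𝓡 (by
      rintro R ⟨C, hC, rfl⟩
      rw [← hfree]
      exact hM.dil' (f := fun b => φ (Pi.single i1 b)) (h.bd.comp _) hC)
    _ ((pairs s l).erase (i1, 1)) rfl (by
      rintro ⟨i, j⟩ hq
      rw [Finset.mem_erase, mem_pairs] at hq
      obtain ⟨hne, hi, -⟩ := hq
      simp only at hi ⊢
      obtain ⟨h1, h2⟩ := hpos i ((hs i).1 hi)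
      intro h0
      rcases Nat.lt_trichotomy j 1 with hj | hj | hj
      · have : j = 0 := by omega
        subst this
        simp at h0
        omega
      · subst hj
        have : l i = l i1 := by push_cast at h0; linarith
        exact hne (by rw [hl this])
      · have : (2 : ℤ) ≤ j := by exact_mod_cast hj
        nlinarith) (by
      rintro q - R ⟨C, hC, rfl⟩ μ μ' hμ
      refine ⟨(((μ ^ (l q.1 - q.2 * l i1) : Kˣ) : K) - ((μ' ^ (l q.1 - q.2 * l i1) : Kˣ) : K)) * C,
        mul_ne_zero (sub_ne_zero.2 fun h => hμ (Units.ext h)) hC, ?_⟩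
      funext b i
      simp only [tw, wact, Pi.sub_apply]
      by_cases hi : i = i1
      · subst hi
        simp only [Pi.single_eq_same]
        have e : ∀ μ : Kˣ, (μ ^ (l q.1 - q.2 * l i) : Kˣ) = (μ ^ (-(q.2 : ℤ))) ^ l i * μ ^ l q.1 := by
          intro μ
          rw [← zpow_mul, ← zpow_add]
          congr 1
          ring
        rw [e, e]
        push_cast
        ring
      · simp [Pi.single_eq_of_ne hi]) (binc l x)
    (fun b => Pi.single i1 (binc l x (i1, 1) * b))
    ⟨_, by
      have : ((l i1).natAbs : K) ≠ 0 := by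
        have h2 : (((l i1).natAbs : ℤ) : K) = (l i1 : K) :=
          congrArg _ (Int.natAbs_of_nonneg hp1.le)
        rw [Int.cast_natCast] at h2
        rw [h2]
        exact hl0 i1
      simp only [binc, Nat.choose_one_right]
      exact mul_ne_zero this hx1, rfl⟩
  have e : M.val (fun _ => φ x) = 0 := by
    rw [← key]
    refine hM.congr_cofinite (Bd.const _) (h.bd.comp _) ?_
    have : ∀ᶠ b : K in cofinite, b ≠ -1 := (Set.finite_singleton (-1 : K)).eventually_cofinite_notMem
    filter_upwards [this] with b hb
    have hb1 : (1 + b : K) ≠ 0 := fun h0 => hb (by linear_combination h0)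
    rw [← hinv (Units.mk0 _ hb1) x]
    congr 1
    have e2 := poly_erase _ (binc l x) _ hq1 b
    simp only [pow_one] at e2
    rw [← e2]
    funext i
    rw [poly_pairs, wact]
    split_ifs with hi
    · congr 1
      have := (hpos i ((hs i).1 hi)).1
      conv_lhs => rw [← Int.natAbs_of_nonneg this.le]
      rw [zpow_natCast]
      simp
    · have : x i = 0 := by by_contra hh; exact hi ((hs i).2 hh)
      rw [this, mul_zero]
  rwa [M.const] at e

end weights


/-! Rational curves and the mixed sign case. -/

section mixed

open Polynomial

variable {K : Type*} [Field K]

/-- `r` is cofinitely the rational function `N / D`, `D(0) = 1`, with derivative `s` at `0` -/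
def Gr (r : K → K) (s : K) : Prop :=
  ∃ N D : K[X], D.coeff 0 = 1 ∧ (∀ᶠ b in cofinite, r b * D.eval b = N.eval b) ∧
    N.coeff 1 - N.coeff 0 * D.coeff 1 = s

theorem Gr.sub {r1 r2 : K → K} {s1 s2 : K} (h1 : Gr r1 s1) (h2 : Gr r2 s2) :
    Gr (fun b => r1 b - r2 b) (s1 - s2) := by
  obtain ⟨N1, D1, hD1, hr1, hs1⟩ := h1
  obtain ⟨N2, D2, hD2, hr2, hs2⟩ := h2
  refine ⟨N1 * D2 - N2 * D1, D1 * D2, ?_, ?_, ?_⟩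
  · rw [mul_coeff_zero, hD1, hD2, mul_one]
  · filter_upwards [hr1, hr2] with b hb1 hb2
    simp only [eval_mul, eval_sub]
    rw [← hb1, ← hb2]
    ring
  · simp only [coeff_sub, mul_coeff_zero, mul_coeff_one, hD1, hD2]
    rw [← hs1, ← hs2]
    ring

theorem Gr.scale {r : K → K} {s : K} (h : Gr r s) (c : K) {κ : K} (hκ : κ ≠ 0) :
    Gr (fun b => c * r (κ * b)) (c * κ * s) := by
  obtain ⟨N, D, hD, hr, hs⟩ := h
  refine ⟨C c * N.comp (C κ * X), D.comp (C κ * X), ?_, ?_, ?_⟩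
  · rw [comp_C_mul_X_coeff, hD]; simp
  · have hinj : Function.Injective (fun b : K => κ * b) := mul_right_injective₀ hκ
    have := hinj.tendsto_cofinite.eventually hr
    filter_upwards [this] with b hb
    simp only [eval_mul, eval_comp, eval_C, eval_X]
    rw [← hb]
    ring
  · simp only [coeff_C_mul, comp_C_mul_X_coeff]
    rw [← hs]
    ring

theorem Gr.ne_zero {r : K → K} {s : K} (h : Gr r s) (hs : s ≠ 0) :
    ∀ᶠ b in cofinite, r b ≠ 0 := by
  obtain ⟨N, D, hD, hr, rfl⟩ := h
  have hN : N ≠ 0 := by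
    rintro rfl
    simp at hs
  have h2 : ∀ᶠ b in cofinite, ¬ N.IsRoot b := by
    have : {b | N.IsRoot b}.Finite := Polynomial.finite_setOfPred_isRoot hN
    exact this.eventually_cofinite_notMem
  filter_upwards [hr, h2] with b hb hb2 h0
  rw [h0, zero_mul] at hb
  exact hb2 hb.symm

theorem gr_init (n : ℕ) (x : K) :
    Gr (fun b => ((1 + b)⁻¹) ^ n * x) (-(n * x)) := by
  refine ⟨C x, (1 + X) ^ n, ?_, ?_, ?_⟩
  · rw [coeff_one_add_X_pow]; simp
  · have : ∀ᶠ b : K in cofinite, b ≠ -1 := (Set.finite_singleton (-1 : K)).eventually_cofinite_notMem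
    filter_upwards [this] with b hb
    have hb1 : (1 + b : K) ≠ 0 := fun h0 => hb (by linear_combination h0)
    simp only [eval_pow, eval_add, eval_one, eval_X, eval_C, inv_pow]
    field_simp
  · rw [coeff_one_add_X_pow]
    simp [coeff_C, mul_comm]

variable [Infinite K] {ι : Type*} {M : Mean K} {φ : (ι → K) → ℝ} {l : ι → ℤ} [Fintype ι]

theorem vanish_mixed (hM : AffInv M) (h : PD φ) (hinv : ∀ a x, φ (wact l a x) = φ x)
    (hl : Function.Injective l) (hl0 : ∀ i, (l i : K) ≠ 0) (i1 : ι)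
    (hfree : M.val (fun b => φ (Pi.single i1 b)) = 0) (x : ι → K) (hx1 : x i1 ≠ 0)
    (hp1 : 0 < l i1) (hmax : ∀ i, x i ≠ 0 → l i ≤ l i1) : φ x = 0 := by
  let s : Finset ι := Finset.univ.filter (fun i => x i ≠ 0 ∧ l i < 0)
  have hs : ∀ i, i ∈ s ↔ x i ≠ 0 ∧ l i < 0 := fun i => by simp [s]
  have hz : ∀ i, l i ≠ 0 := fun i h0 => hl0 i (by rw [h0]; simp)
  let 𝓡 : Set (K → ι → K) := {R | (∀ b i, R b i ≠ 0 → 0 < l i ∧ l i ≤ l i1) ∧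
    ∃ t : K, t ≠ 0 ∧ Gr (fun b => R b i1) t}
  have key := kill hM h hinv i1 𝓡 (by
      rintro R ⟨hR, t, ht, hG⟩
      refine hM.zero_of_cofinite (h.bd.comp _) ?_
      filter_upwards [hG.ne_zero ht] with b hb
      exact vanish_pos hM h hinv hl hl0 i1 hfree (R b) hb (hR b))
    _ (pairs s l) rfl (by
      rintro ⟨i, j⟩ hq
      rw [mem_pairs] at hq
      obtain ⟨hi, -⟩ := hq
      simp only at hi ⊢
      have := ((hs i).1 hi).2
      have h2 : 0 ≤ (j : ℤ) * l i1 := mul_nonneg (by positivity) hp1.le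
      intro h0
      linarith) (by
      rintro q - R ⟨hR, t, ht, hG⟩ μ μ' hμ
      refine ⟨?_, (((μ ^ (l q.1 - q.2 * l i1) : Kˣ) : K) - ((μ' ^ (l q.1 - q.2 * l i1) : Kˣ) : K)) * t,
        mul_ne_zero (sub_ne_zero.2 fun h => hμ (Units.ext h)) ht, ?_⟩
      · intro b i hi
        by_contra hcon
        have h0 : ∀ b, R b i = 0 := fun b => by
          by_contra hh
          exact hcon (hR b i hh)
        apply hi
        simp [tw, wact, h0]
      · have e : ∀ μ : Kˣ, (μ ^ (l q.1 - q.2 * l i1) : Kˣ)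
            = (μ ^ (-(q.2 : ℤ))) ^ l i1 * μ ^ l q.1 := by
          intro μ
          rw [← zpow_mul, ← zpow_add]
          congr 1
          ring
        have g1 := hG.scale (((μ ^ (-(q.2 : ℤ))) ^ l i1 : Kˣ) : K) (Units.ne_zero (μ ^ l q.1))
        have g2 := hG.scale (((μ' ^ (-(q.2 : ℤ))) ^ l i1 : Kˣ) : K) (Units.ne_zero (μ' ^ l q.1))
        have := g1.sub g2
        rw [e, e, sub_mul, Units.val_mul, Units.val_mul]
        exact this) (binc l x)
    (fun b i => if 0 < l i then ((1 + b)⁻¹) ^ (l i).natAbs * x i else 0)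
    ⟨by
      intro b i hi
      by_cases hc : 0 < l i
      · refine ⟨hc, hmax i ?_⟩
        dsimp only at hi
        rw [if_pos hc] at hi
        exact right_ne_zero_of_mul hi
      · dsimp only at hi
        rw [if_neg hc] at hi
        exact absurd rfl hi, _, by
      have : ((l i1).natAbs : K) ≠ 0 := by
        have h2 : (((l i1).natAbs : ℤ) : K) = (l i1 : K) :=
          congrArg _ (Int.natAbs_of_nonneg hp1.le)
        rw [Int.cast_natCast] at h2
        rw [h2]
        exact hl0 i1
      exact neg_ne_zero.2 (mul_ne_zero this hx1), by
      simp only [if_pos hp1]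
      exact gr_init _ _⟩
  have e : M.val (fun _ => φ x) = 0 := by
    rw [← key]
    refine hM.congr_cofinite (Bd.const _) (h.bd.comp _) ?_
    have : ∀ᶠ b : K in cofinite, b ≠ -1 := (Set.finite_singleton (-1 : K)).eventually_cofinite_notMem
    filter_upwards [this] with b hb
    have hb1 : (1 + b : K) ≠ 0 := fun h0 => hb (by linear_combination h0)
    rw [← hinv (Units.mk0 _ hb1)⁻¹ x]
    congr 1
    funext i
    rw [Pi.add_apply, poly_pairs, wact]
    by_cases hxi : x i = 0
    · simp [hxi]
    rcases lt_or_gt_of_ne (hz i) with hi | hi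
    · rw [if_pos ((hs i).2 ⟨hxi, hi⟩), if_neg (by omega), add_zero]
      congr 1
      have h2 : (Units.mk0 _ hb1)⁻¹ ^ l i = (Units.mk0 _ hb1)⁻¹ ^ (-((l i).natAbs : ℤ)) :=
        congrArg _ (by omega)
      rw [h2, zpow_neg, zpow_natCast, inv_pow, inv_inv]
      simp
    · rw [if_neg (fun hh => by have := ((hs i).1 hh).2; omega), if_pos hi, zero_add]
      congr 1
      have h2 : (Units.mk0 _ hb1)⁻¹ ^ l i = (Units.mk0 _ hb1)⁻¹ ^ ((l i).natAbs : ℤ) :=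
        congrArg _ (by omega)
      rw [h2, zpow_natCast]
      simp
  rwa [M.const] at e

/-- the step: remove the coordinate with the largest positive weight in the support -/
theorem pos_step (hM : AffInv M) (h : PD φ) (hinv : ∀ a x, φ (wact l a x) = φ x)
    (hl : Function.Injective l) (hl0 : ∀ i, (l i : K) ≠ 0) (x : ι → K)
    (hex : ∃ i, x i ≠ 0 ∧ 0 < l i)
    (ih : ∀ φ' : (ι → K) → ℝ, PD φ' → (∀ a x, φ' (wact l a x) = φ' x) → ∀ y : ι → K,
      (Finset.univ.filter (fun i => y i ≠ 0)).card < (Finset.univ.filter (fun i => x i ≠ 0)).card →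
      0 ≤ φ' y) : 0 ≤ φ x := by
  obtain ⟨i0, hi0, hli0⟩ := hex
  obtain ⟨i1, hi1, hmax⟩ := Finset.exists_max_image (Finset.univ.filter (fun i => x i ≠ 0)) l
    ⟨i0, by simpa using hi0⟩
  have hx1 : x i1 ≠ 0 := by simpa using hi1
  have hmax' : ∀ i, x i ≠ 0 → l i ≤ l i1 := fun i hi => hmax i (by simpa using hi)
  have hp1 : 0 < l i1 := lt_of_lt_of_le hli0 (hmax' i0 hi0)
  let t : K →+ (ι → K) := AddMonoidHom.single (fun _ => K) i1
  have ht : ∀ b, t b = Pi.single i1 b := fun b => rfl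
  let φW : (ι → K) → ℝ := fun x => M.val (fun b => φ (x + t b))
  have hW : PD φW := h.inv_part hM t
  have hF : PD (fun x => φ x - φW x) := h.free_part hM t
  have hWinv : ∀ a x, φW (wact l a x) = φW x := by
    intro a x
    change M.val _ = M.val _
    rw [← hM.dil' (f := fun b => φ (wact l a x + t b)) (h.bd.comp _) (Units.ne_zero (a ^ l i1))]
    congr 1
    funext b
    rw [← hinv a (x + t b)]
    congr 1
    funext i
    by_cases hi : i = i1
    · subst hi
      simp [wact, ht, mul_add]
    · simp [wact, ht, Pi.single_eq_of_ne hi]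
  have hWper : ∀ x c, φW (x + t c) = φW x := by
    intro x c
    have := hM.trans c (fun b => φ (x + t b)) (h.bd.comp _)
    change M.val _ = M.val _
    rw [← this]
    congr 1
    funext b
    rw [add_assoc, ← map_add, add_comm c b]
  have h1 : 0 ≤ φW x := by
    have e : x + t (-x i1) = Function.update x i1 0 := by
      funext i
      by_cases hi : i = i1
      · subst hi; simp [ht]
      · simp [ht, Pi.single_eq_of_ne hi, Function.update_of_ne hi]
    rw [← hWper x (-x i1), e]
    refine ih φW hW hWinv _ (Finset.card_lt_card ?_)
    rw [Finset.ssubset_iff_of_subset]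
    · exact ⟨i1, hi1, by simp⟩
    · intro i hi
      by_cases hh : i = i1
      · subst hh; simp at hi
      · simpa [Function.update_of_ne hh] using hi
  have h2 : φ x - φW x = 0 := by
    refine vanish_mixed (φ := fun x => φ x - φW x) hM hF (fun a x => by simp only [hinv, hWinv]) hl hl0 i1 ?_ x hx1 hp1 hmax'
    have e : ∀ b, φW (Pi.single i1 b) = φW 0 := by
      intro b
      rw [← ht, ← hWper 0 b, zero_add]
    simp only [e]
    rw [M.sub (h.bd.comp _) (Bd.const _), M.const]
    change _ - M.val _ = 0
    simp [ht]
  linarith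

theorem wact_neg (l : ι → ℤ) (a : Kˣ) (x : ι → K) : wact (fun i => - l i) a x = wact l a⁻¹ x := by
  funext i
  simp [wact]

/-- a positive definite invariant function is nonnegative -/
theorem pd_nonneg (hl : Function.Injective l) (hl0 : ∀ i, (l i : K) ≠ 0) (n : ℕ) :
    ∀ φ : (ι → K) → ℝ, PD φ → (∀ a x, φ (wact l a x) = φ x) → ∀ x : ι → K,
      (Finset.univ.filter (fun i => x i ≠ 0)).card = n → 0 ≤ φ x := by
  obtain ⟨M, hM⟩ := exists_affInv K
  induction n using Nat.strong_induction_on with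
  | _ n ih =>
    intro φ h hinv x hx
    by_cases hx0 : x = 0
    · rw [hx0]; exact h.zero_nonneg
    obtain ⟨i, hi⟩ : ∃ i, x i ≠ 0 := by
      by_contra hh
      push Not at hh
      exact hx0 (funext hh)
    have hz : l i ≠ 0 := fun h0 => hl0 i (by rw [h0]; simp)
    by_cases hex : ∃ i, x i ≠ 0 ∧ 0 < l i
    · exact pos_step hM h hinv hl hl0 x hex
        (fun φ' h' hinv' y hy => ih _ (hx ▸ hy) φ' h' hinv' y rfl)
    · have hneg : l i < 0 := by
        by_contra hh
        exact hex ⟨i, hi, by omega⟩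
      refine pos_step (l := fun i => - l i) hM h (fun a x => by rw [wact_neg, hinv])
        (fun a b hab => hl (neg_injective hab)) (fun i => by simpa using hl0 i) x
        ⟨i, hi, by omega⟩ (fun φ' h' hinv' y hy => ih _ (hx ▸ hy) φ' h' (fun a x => ?_) y rfl)
      have := hinv' a⁻¹ x
      rwa [wact_neg, inv_inv] at this

end mixed

/-! Recurrence. -/

section recurrence

theorem weight_split (K : Type*) [Field K] (p : ℕ) [hp : ExpChar K p] (m : ℤ) (hm : m ≠ 0) :
    ∃ (k : ℕ) (l : ℤ), m = (p ^ k : ℕ) * l ∧ (l : K) ≠ 0 := by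
  cases hp with
  | zero => exact ⟨0, m, by simp, by exact_mod_cast hm⟩
  | prime hprime =>
    rename_i hch
    have hfin : FiniteMultiplicity (p : ℤ) m := by
      rw [Int.finiteMultiplicity_iff]
      exact ⟨by simpa using hprime.ne_one, hm⟩
    obtain ⟨c, hc, hnd⟩ := hfin.exists_eq_pow_mul_and_not_dvd
    refine ⟨_, c, by rw [Nat.cast_pow]; exact hc, fun h0 => hnd ?_⟩
    exact (CharP.intCast_eq_zero_iff K p c).1 h0

theorem corr_pd {U : Type*} [AddCommGroup U] (m : Mean U) (hm : ∀ u, m.Inv (fun x => x + u))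
    {g : U → ℝ} (hg : Bd g) :
    PD (fun u => m.val (fun x => g x * g (x + u)) - (m.val g) ^ 2) where
  even u := by
    have := hm u (fun x => g x * g (x + -u)) (hg.mul (hg.comp _))
    rw [← this]
    congr 2
    funext x
    rw [add_neg_cancel_right, mul_comm]
  psd ι _ c x := by
    have hgb : ∀ i, Bd (fun y => g (y + x i)) := fun i => hg.comp _
    have h0 := m.nonneg (f := fun y => ∑ i, ∑ j, c i * c j * ((g (y + x i) - m.val g) * (g (y + x j) - m.val g)))
      (Bd.sum _ fun i => Bd.sum _ fun j => (((hgb i).sub (Bd.const _)).mul ((hgb j).sub (Bd.const _))).cmul _)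
      (fun y => by
        have : ∑ i, ∑ j, c i * c j * ((g (y + x i) - m.val g) * (g (y + x j) - m.val g))
            = (∑ i, c i * (g (y + x i) - m.val g)) ^ 2 := by
          rw [sq, Finset.sum_mul_sum]
          refine Finset.sum_congr rfl fun i _ => Finset.sum_congr rfl fun j _ => by ring
        rw [this]
        positivity)
    rw [m.sum _ (fun i => Bd.sum _ fun j => (((hgb i).sub (Bd.const _)).mul ((hgb j).sub (Bd.const _))).cmul _)] at h0
    refine h0.trans_eq (Finset.sum_congr rfl fun i _ => ?_)
    rw [m.sum _ (fun j => (((hgb i).sub (Bd.const _)).mul ((hgb j).sub (Bd.const _))).cmul _)]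
    refine Finset.sum_congr rfl fun j _ => ?_
    rw [m.smul _ (((hgb i).sub (Bd.const _)).mul ((hgb j).sub (Bd.const _)))]
    congr 1
    have e : (fun y => (g (y + x i) - m.val g) * (g (y + x j) - m.val g))
        = fun y => g (y + x j) * g (y + x i)
          + ((m.val g) * (m.val g) - ((m.val g) * g (y + x i) + (m.val g) * g (y + x j))) := by
      funext y; ring
    rw [e, m.add ((hgb j).mul (hgb i)) ((Bd.const _).sub (((hgb i).cmul _).add ((hgb j).cmul _))),
      m.sub (Bd.const _) (((hgb i).cmul _).add ((hgb j).cmul _)), m.const,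
      m.add ((hgb i).cmul _) ((hgb j).cmul _), m.smul _ (hgb i), m.smul _ (hgb j),
      hm (x i) g hg, hm (x j) g hg]
    have e2 := hm (x j) (fun y => g y * g (y + (x i - x j))) (hg.mul (hg.comp _))
    rw [← e2]
    have e3 : (fun y => g (y + x j) * g (y + x j + (x i - x j)))
        = fun y => g (y + x j) * g (y + x i) := by
      funext y
      rw [add_assoc y, add_sub_cancel]
    rw [e3]
    ring

theorem recurrence {K U : Type*} [Field K] [Infinite K] [AddCommGroup U] [Module K U]
    (r : ℕ) (Usub : Fin r → Submodule K U) (m : Fin r → ℤ) (hm0 : ∀ i, m i ≠ 0)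
    (ρ : Kˣ →* (U ≃ₗ[K] U))
    (hinternal : DirectSum.IsInternal Usub)
    (hweight : ∀ (i : Fin r) (a : Kˣ) (u : U), u ∈ Usub i → ρ a u = ((a ^ m i : Kˣ) : K) • u)
    (N : Mean U) (hN : ∀ u, N.Inv (fun x => x + u)) (B : Set U)
    (hB : 0 < N.val (fun x => if x ∈ B then 1 else 0)) (f : U) :
    ∃ a : Kˣ, ∃ u ∈ B, u + ρ a f ∈ B := by
  by_contra hcon
  push Not at hcon
  -- decomposition of f
  obtain ⟨v, hv, hvf⟩ : ∃ v : Fin r → U, (∀ i, v i ∈ Usub i) ∧ ∑ i, v i = f := by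
    have : f ∈ iSup Usub := by rw [hinternal.submodule_iSup_eq_top]; trivial
    rw [Submodule.mem_iSup_iff_exists_finsupp] at this
    obtain ⟨v, hv, hvf⟩ := this
    refine ⟨v, hv, ?_⟩
    rw [← hvf, Finsupp.sum_fintype _ _ (fun _ => rfl)]
  obtain ⟨p, hp⟩ := ExpChar.exists K
  choose k l' hkl hl' using fun i => weight_split K p (m i) (hm0 i)
  let ι := Set.range l'
  let l : ι → ℤ := fun i => i.1
  have hl : Function.Injective l := Subtype.val_injective
  have hl0 : ∀ i, (l i : K) ≠ 0 := by
    rintro ⟨_, i, rfl⟩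
    exact hl' i
  let θ : (ι → K) →+ U := AddMonoidHom.mk'
    (fun x => ∑ i, (x ⟨l' i, i, rfl⟩) ^ (p ^ k i) • v i) (by
      intro x y
      rw [← Finset.sum_add_distrib]
      refine Finset.sum_congr rfl fun i _ => ?_
      rw [Pi.add_apply, add_pow_expChar_pow, add_smul])
  have hθ : ∀ x, θ x = ∑ i, (x ⟨l' i, i, rfl⟩) ^ (p ^ k i) • v i := fun x => rfl
  have hθ1 : θ 1 = f := by
    rw [hθ, ← hvf]
    simp
  have hθρ : ∀ a x, ρ a (θ x) = θ (wact l a x) := by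
    intro a x
    rw [hθ, hθ, map_sum]
    refine Finset.sum_congr rfl fun i _ => ?_
    rw [map_smul, hweight i a _ (hv i), smul_smul]
    congr 1
    simp only [wact, l]
    rw [mul_pow, mul_comm]
    congr 1
    rw [hkl i, mul_comm, zpow_mul, zpow_natCast]
    simp
  let g : U → ℝ := fun x => if x ∈ B then 1 else 0
  have hg : Bd g := bd_ind _
  let c : U → ℝ := fun u => N.val (fun x => g x * g (x + u)) - (N.val g) ^ 2
  have hc : PD c := corr_pd N hN hg
  obtain ⟨L, hL⟩ := Mean.exists_inv (S := Kˣ) (α := Kˣ) (fun a x => x * a)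
    (fun a b x => by rw [mul_assoc, mul_comm b a, mul_assoc])
  let φ : (ι → K) → ℝ := fun x => L.val (fun a => c (ρ a (θ x)))
  have hφ : PD φ := by
    refine PD.mean L (ψ := fun a x => c (ρ a (θ x))) (fun a => ?_) (fun x => hc.bd.comp _)
    exact (hc.comp ((ρ a : U ≃ₗ[K] U).toLinearMap.toAddMonoidHom)).comp θ
  have hinv : ∀ a x, φ (wact l a x) = φ x := by
    intro a x
    have := hL a (fun b => c (ρ b (θ x))) (hc.bd.comp _)
    change L.val _ = L.val _
    rw [← this]
    congr 1
    funext b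
    rw [← hθρ, map_mul]
    rfl
  have h1 : 0 ≤ φ 1 := pd_nonneg hl hl0 _ φ hφ hinv 1 rfl
  have h2 : ∀ a, c (ρ a f) = -(N.val g) ^ 2 := by
    intro a
    have : (fun x => g x * g (x + ρ a f)) = fun _ => 0 := by
      funext x
      by_cases hx : x ∈ B
      · simp [g, hcon a x hx]
      · simp [g, hx]
    simp only [c, this, N.const]
    ring
  have h3 : φ 1 = -(N.val g) ^ 2 := by
    simp only [φ, hθ1, h2]
    exact L.const _
  have : 0 < N.val g := hB
  nlinarith

end recurrence

section folner

theorem folner_mean {U : Type*} [AddCommGroup U] {E : Set U} (hE : PosUpperBanachDensity E) :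
    ∃ N : Mean U, (∀ u, N.Inv (fun x => x + u)) ∧ 0 < N.val (fun x => if x ∈ E then 1 else 0) := by
  obtain ⟨F, ⟨hne, hF⟩, hpos⟩ := hE
  obtain ⟨δ, hδ0, hδ⟩ := exists_between hpos
  have hfr : ∃ᶠ n in atTop, δ < (((F n).filter (· ∈ E)).card : ℝ) / ((F n).card : ℝ) :=
    frequently_lt_of_lt_limsup (isCoboundedUnder_le_of_le atTop (x := 0) (fun n => by positivity)) hδ
  have hnb : (atTop ⊓ 𝓟 {n | δ < (((F n).filter (· ∈ E)).card : ℝ) / ((F n).card : ℝ)}).NeBot :=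
    frequently_mem_iff_neBot.1 hfr
  let 𝒰 := Ultrafilter.of (atTop ⊓ 𝓟 {n | δ < (((F n).filter (· ∈ E)).card : ℝ) / ((F n).card : ℝ)})
  have h𝒰 := Ultrafilter.of_le (atTop ⊓ 𝓟 {n | δ < (((F n).filter (· ∈ E)).card : ℝ) / ((F n).card : ℝ)})
  have h1 : (𝒰 : Filter ℕ) ≤ atTop := h𝒰.trans inf_le_left
  have h2 : ∀ᶠ n in (𝒰 : Filter ℕ), δ < (((F n).filter (· ∈ E)).card : ℝ) / ((F n).card : ℝ) :=
    (h𝒰.trans inf_le_right) (mem_principal_self _)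
  let A : ℕ → Mean U := fun n => Mean.avg (F n) (hne n)
  refine ⟨(Mean.ultra 𝒰).bind A, ?_, ?_⟩
  · intro u f hf
    refine Mean.ultra_congr 𝒰 (Mean.bd_val A (hf.comp _)) (Mean.bd_val A hf) ?_
    refine Tendsto.mono_left ?_ h1
    obtain ⟨C, hC⟩ := hf
    have hlim : Tendsto (fun n => 2 * C * (1 - ((F n ∩ (F n).image (· + u)).card : ℝ) / ((F n).card : ℝ)))
        atTop (𝓝 0) := by
      have := ((tendsto_const_nhds (x := (1 : ℝ))).sub (hF u)).const_mul (2 * C)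
      simpa using this
    refine squeeze_zero_norm (fun n => ?_) hlim
    have hcard : (0 : ℝ) < (F n).card := by exact_mod_cast (hne n).card_pos
    have hval : ∀ f, (A n).val f = (∑ x ∈ F n, f x) / ((F n).card : ℝ) := fun f => rfl
    rw [hval, hval, ← sub_div, Real.norm_eq_abs, abs_div, abs_of_pos hcard]
    set G := (F n).image (· + u) with hG
    have hsum : ∑ x ∈ F n, f (x + u) = ∑ x ∈ G, f x := by
      rw [hG, Finset.sum_image (fun a _ b _ hab => add_right_cancel hab)]
    have hGc : (G.card : ℝ) = (F n).card := by
      rw [hG, Finset.card_image_of_injective _ (add_left_injective u)]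
    have hbound : ∀ S : Finset U, |∑ x ∈ S, f x| ≤ S.card * C := by
      intro S
      refine (Finset.abs_sum_le_sum_abs _ _).trans ?_
      refine (Finset.sum_le_card_nsmul S _ C (fun x _ => hC x)).trans_eq ?_
      rw [nsmul_eq_mul]
    have d1 : ∑ x ∈ G, f x = ∑ x ∈ F n ∩ G, f x + ∑ x ∈ G \ F n, f x := by
      rw [Finset.inter_comm, ← Finset.sum_union (Finset.disjoint_sdiff_inter _ _).symm, Finset.union_comm,
        Finset.sdiff_union_inter]
    have d2 : ∑ x ∈ F n, f x = ∑ x ∈ F n ∩ G, f x + ∑ x ∈ F n \ G, f x := by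
      rw [← Finset.sum_union (Finset.disjoint_sdiff_inter _ _).symm, Finset.union_comm,
        Finset.sdiff_union_inter]
    have c1 : ((F n ∩ G).card : ℝ) + (G \ F n).card = (F n).card := by
      rw [← hGc, Finset.inter_comm]
      exact_mod_cast Finset.card_inter_add_card_sdiff G (F n)
    have c2 : ((F n ∩ G).card : ℝ) + (F n \ G).card = (F n).card := by
      exact_mod_cast Finset.card_inter_add_card_sdiff (F n) G
    rw [hsum, d1, d2, div_le_iff₀ hcard]
    have e : 2 * C * (1 - ((F n ∩ G).card : ℝ) / (F n).card) * (F n).card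
        = 2 * C * ((F n).card - (F n ∩ G).card) := by
      field_simp
    rw [e, add_sub_add_left_eq_sub]
    have b1 := abs_le.1 (hbound (G \ F n))
    have b2 := abs_le.1 (hbound (F n \ G))
    have k1 : ((G \ F n).card : ℝ) = (F n).card - (F n ∩ G).card := by linarith
    have k2 : ((F n \ G).card : ℝ) = (F n).card - (F n ∩ G).card := by linarith
    rw [k1] at b1
    rw [k2] at b2
    rw [abs_le]
    constructor <;> nlinarith [b1.1, b1.2, b2.1, b2.2]
  · refine lt_of_lt_of_le hδ0 ?_
    have ht := Mean.tendsto_limUnder_ultra 𝒰 (Mean.bd_val A (bd_ind (fun x => x ∈ E)))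
    refine ge_of_tendsto ht ?_
    filter_upwards [h2] with n hn
    refine hn.le.trans_eq ?_
    change _ = (∑ x ∈ F n, (if x ∈ E then (1 : ℝ) else 0)) / ((F n).card : ℝ)
    rw [Finset.sum_boole]

end folner


/-- Pinned images of invariant functions: for a diagonalizable representation of `K^*` on a
countable `K`-vector space `U` with nonzero integer weights, any `ρ_U`-invariant function
`ψ` and any set `E ⊆ U` of positive upper Banach density, every finite set of `ψ`-values of
`U` is realized inside `ψ(E - u_F)` for some pin `u_F ∈ E`; in particular
`ψ(E - E) = ψ(U)`. -/
theorem statement9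
    {K U Y : Type*} [Field K] [Countable K] [Infinite K]
    [AddCommGroup U] [Module K U] [Countable U]
    (r : ℕ) (Usub : Fin r → Submodule K U) (m : Fin r → ℤ)
    (hminj : Function.Injective m) (hm0 : ∀ i, m i ≠ 0)
    (ρ : Kˣ →* (U ≃ₗ[K] U))
    (hinternal : DirectSum.IsInternal Usub)
    (hweight : ∀ (i : Fin r) (a : Kˣ) (u : U), u ∈ Usub i → ρ a u = ((a ^ m i : Kˣ) : K) • u)
    (ψ : U → Y) (hψ : ∀ (a : Kˣ) (u : U), ψ (ρ a u) = ψ u)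
    (E : Set U) (hE : PosUpperBanachDensity E) :
    (∀ F : Finset U, ∃ uF ∈ E, ψ '' ↑F ⊆ ψ '' ((fun x => x - uF) '' E)) ∧
      ψ '' (E - E) = Set.range ψ := by
  obtain ⟨N, hN, hNE⟩ := folner_mean hE
  have main : ∀ F : Finset U, ∃ uF ∈ E, ∀ f ∈ F, ∃ a : Kˣ, uF + ρ a f ∈ E := by
    intro F
    by_contra hcon
    push Not at hcon
    obtain ⟨B, hB⟩ : ∃ B : U → Set U, ∀ f x, x ∈ B f ↔ (x ∈ E ∧ ∀ a : Kˣ, x + ρ a f ∉ E) :=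
      ⟨fun f => {x | x ∈ E ∧ ∀ a : Kˣ, x + ρ a f ∉ E}, fun _ _ => Iff.rfl⟩
    have hz : ∀ f : U, N.val (fun x => if x ∈ B f then 1 else 0) = 0 := by
      intro f
      by_contra hne
      have hpos : 0 < N.val (fun x => if x ∈ B f then 1 else 0) := by
        refine lt_of_le_of_ne (N.nonneg (bd_ind _) (fun x => ?_)) (Ne.symm hne)
        split_ifs <;> simp
      obtain ⟨a, u, hu, hu2⟩ := recurrence r Usub m hm0 ρ hinternal hweight N hN _ hpos f
      exact ((hB f u).1 hu).2 a ((hB f _).1 hu2).1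
    have hle := N.mono (f := fun x => if x ∈ E then (1 : ℝ) else 0)
      (g := fun x => ∑ f ∈ F, if x ∈ B f then (1 : ℝ) else 0)
      (bd_ind _) (Bd.sum _ fun f => bd_ind _) (fun x => by
        have hnn : ∀ f ∈ F, (0 : ℝ) ≤ if x ∈ B f then (1 : ℝ) else 0 := by
          intro f _
          split_ifs <;> simp
        by_cases hx : x ∈ E
        · obtain ⟨f, hf, hfa⟩ := hcon x hx
          have := Finset.single_le_sum hnn hf
          rw [if_pos ((hB f x).2 ⟨hx, hfa⟩)] at this
          rw [if_pos hx]
          exact this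
        · rw [if_neg hx]
          exact Finset.sum_nonneg hnn)
    rw [N.sum _ (fun f => bd_ind _)] at hle
    simp only [hz, Finset.sum_const_zero] at hle
    linarith
  refine ⟨fun F => ?_, ?_⟩
  · obtain ⟨uF, huF, h⟩ := main F
    refine ⟨uF, huF, ?_⟩
    rintro _ ⟨f, hf, rfl⟩
    obtain ⟨a, ha⟩ := h f hf
    exact ⟨ρ a f, ⟨_, ha, by simp⟩, hψ a f⟩
  · apply Set.Subset.antisymm (Set.image_subset_range _ _)
    rintro _ ⟨f, rfl⟩
    obtain ⟨uF, huF, h⟩ := main {f}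
    obtain ⟨a, ha⟩ := h f (by simp)
    exact ⟨ρ a f, Set.mem_sub.2 ⟨_, ha, _, huF, by simp⟩, hψ a f⟩
end

section
/- Let K be a countably infinite field and let E ⊆ K² be a set with positive upper Banach density (with respect to the additive group (K²,+)). Then Prod(E − E) = K, where Prod(S) = {xy : (x,y) ∈ S} for S ⊆ K². Moreover, for every finite set Q ⊆ K there exists u_Q ∈ E such that Q ⊆ Prod(E − u_Q). -/
open Filter Topology Pointwise
open scoped Classical

universe u

/-- Normalised positive definite functions on `K × K` vanishing on the hyperbola. -/
structure GoodFn {K : Type u} [Field K] (q : K) (a : ℝ) (φ : K × K → ℝ) : Prop where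
  nonneg : ∀ p, 0 ≤ φ p
  le_one : ∀ p, φ p ≤ 1
  symm : ∀ p, φ (-p) = φ p
  psd : ∀ (ι : Type u) (s : Finset ι) (p : ι → K × K) (w : ι → ℝ),
    a * (∑ i ∈ s, w i) ^ 2 ≤ ∑ i ∈ s, ∑ j ∈ s, w i * w j * φ (p i - p j)
  zero : ∀ t : K, t ≠ 0 → φ (t, q / t) = 0

theorem GoodFn.of_tendsto {K : Type u} [Field K] {q : K} {a : ℝ} {φ : K × K → ℝ}
    {α : Type*} {l : Filter α} [l.NeBot] {ψ : α → K × K → ℝ} (h : ∀ i, GoodFn q a (ψ i))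
    (hl : ∀ p, Tendsto (fun i => ψ i p) l (𝓝 (φ p))) : GoodFn q a φ where
  nonneg p := ge_of_tendsto' (hl p) fun i => (h i).nonneg p
  le_one p := le_of_tendsto' (hl p) fun i => (h i).le_one p
  symm p := by
    have h1 := hl (-p)
    have h2 : (fun i => ψ i (-p)) = fun i => ψ i p := funext fun i => (h i).symm p
    rw [h2] at h1
    exact tendsto_nhds_unique h1 (hl p)
  psd ι s p w := by
    have h1 : Tendsto (fun n => ∑ i ∈ s, ∑ j ∈ s, w i * w j * ψ n (p i - p j)) l
        (𝓝 (∑ i ∈ s, ∑ j ∈ s, w i * w j * φ (p i - p j))) :=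
      tendsto_finsetSum _ fun i _ => tendsto_finsetSum _ fun j _ => (hl _).const_mul _
    exact ge_of_tendsto' h1 fun n => (h n).psd ι s p w
  zero t ht := by
    have h1 := hl (t, q / t)
    have h2 : (fun i => ψ i (t, q / t)) = fun i => 0 := funext fun i => (h i).zero t ht
    rw [h2] at h1
    exact tendsto_nhds_unique h1 tendsto_const_nhds

theorem GoodFn.comp {K : Type u} [Field K] {q : K} {a : ℝ} {φ : K × K → ℝ}
    (h : GoodFn q a φ) {t : K} (ht : t ≠ 0) :
    GoodFn q a (fun p => φ (t * p.1, t⁻¹ * p.2)) where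
  nonneg p := h.nonneg _
  le_one p := h.le_one _
  symm p := by
    rw [← h.symm]; congr 1; ext <;> simp
  psd ι s p w := by
    have := h.psd ι s (fun i => (t * (p i).1, t⁻¹ * (p i).2)) w
    simpa [mul_sub] using this
  zero x hx := by
    have := h.zero (t * x) (mul_ne_zero ht hx)
    rw [← this]; congr 2; field_simp

theorem GoodFn.avg {K : Type u} [Field K] {q : K} {a : ℝ} {ψ : ℕ → K × K → ℝ}
    (h : ∀ k, GoodFn q a (ψ k)) {n : ℕ} (hn : 0 < n) :
    GoodFn q a (fun p => (∑ k ∈ Finset.range n, ψ k p) / n) where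
  nonneg p := div_nonneg (Finset.sum_nonneg fun k _ => (h k).nonneg p) (by positivity)
  le_one p := by
    rw [div_le_one (by positivity)]
    calc _ ≤ ∑ k ∈ Finset.range n, (1 : ℝ) := Finset.sum_le_sum fun k _ => (h k).le_one p
      _ = n := by simp
  symm p := by simp only [(h _).symm]
  psd ι s p w := by
    have h1 : ∑ i ∈ s, ∑ j ∈ s, w i * w j * ((∑ k ∈ Finset.range n, ψ k (p i - p j)) / n)
        = (∑ k ∈ Finset.range n, ∑ i ∈ s, ∑ j ∈ s, w i * w j * ψ k (p i - p j)) / n := by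
      simp only [Finset.mul_sum, Finset.sum_div, mul_div_assoc]
      conv_rhs => rw [Finset.sum_comm]
      refine Finset.sum_congr rfl fun i _ => ?_
      rw [Finset.sum_comm]
    rw [h1, le_div_iff₀ (by positivity)]
    calc _ = ∑ k ∈ Finset.range n, a * (∑ i ∈ s, w i) ^ 2 := by simp [mul_comm]
      _ ≤ _ := Finset.sum_le_sum fun k _ => (h k).psd ι s p w
  zero t ht := by simp [(h _).zero t ht]

theorem GoodFn.approx_inv {K : Type u} [Field K] {q : K} {a : ℝ} {φ : K × K → ℝ}
    (h : GoodFn q a φ) (n : ℕ) (S : Finset K) :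
    ∃ ψ, GoodFn q a ψ ∧ ∀ t ∈ S, t ≠ 0 → ∀ p : K × K,
      |ψ (t * p.1, t⁻¹ * p.2) - ψ p| ≤ 1 / ((n : ℝ) + 1) := by
  induction S using Finset.induction_on with
  | empty => exact ⟨φ, h, by simp⟩
  | insert g S hg ih =>
    obtain ⟨ψ, hψ, hS⟩ := ih
    by_cases hg0 : g = 0
    · refine ⟨ψ, hψ, fun t ht ht0 => hS t ?_ ht0⟩
      rcases Finset.mem_insert.1 ht with rfl | h'
      · exact absurd hg0 ht0
      · exact h'
    have hpos : (0 : ℝ) < (n : ℝ) + 1 := by positivity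
    refine ⟨fun p => (∑ k ∈ Finset.range (n + 1), ψ (g ^ k * p.1, (g ^ k)⁻¹ * p.2)) / (n + 1 : ℕ),
      GoodFn.avg (fun k => hψ.comp (pow_ne_zero k hg0)) n.succ_pos, ?_⟩
    intro t ht ht0 p
    rw [← sub_div, ← Finset.sum_sub_distrib, abs_div, abs_of_pos (by positivity : (0:ℝ) < (n+1:ℕ))]
    rcases Finset.mem_insert.1 ht with rfl | h'
    · have := Finset.sum_range_sub (fun k => ψ (t ^ k * p.1, (t ^ k)⁻¹ * p.2)) (n + 1)
      have e : ∑ k ∈ Finset.range (n + 1), (ψ (t ^ k * (t * p.1), (t ^ k)⁻¹ * (t⁻¹ * p.2))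
          - ψ (t ^ k * p.1, (t ^ k)⁻¹ * p.2)) =
          ψ (t ^ (n+1) * p.1, (t ^ (n+1))⁻¹ * p.2) - ψ (t ^ 0 * p.1, (t ^ 0)⁻¹ * p.2) := by
        rw [← this]
        refine Finset.sum_congr rfl fun k _ => ?_
        congr 2
        ext
        · simp; ring
        · simp [pow_succ]; ring
      simp only [e]
      push_cast
      gcongr
      rw [abs_le]
      constructor <;> linarith [hψ.nonneg (t ^ (n+1) * p.1, (t ^ (n+1))⁻¹ * p.2),
        hψ.le_one (t ^ (n+1) * p.1, (t ^ (n+1))⁻¹ * p.2),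
        hψ.nonneg (t ^ 0 * p.1, (t ^ 0)⁻¹ * p.2), hψ.le_one (t ^ 0 * p.1, (t ^ 0)⁻¹ * p.2)]
    · rw [div_le_iff₀ (by positivity)]
      calc _ ≤ ∑ k ∈ Finset.range (n + 1), |_| := Finset.abs_sum_le_sum_abs _ _
        _ ≤ ∑ k ∈ Finset.range (n + 1), 1 / ((n : ℝ) + 1) := by
          refine Finset.sum_le_sum fun k _ => ?_
          have := hS t h' ht0 (g ^ k * p.1, (g ^ k)⁻¹ * p.2)
          have e : ((g ^ k * (t * p.1), (g ^ k)⁻¹ * (t⁻¹ * p.2)) : K × K)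
            = (t * (g ^ k * p.1), t⁻¹ * ((g ^ k)⁻¹ * p.2)) := by
            ext <;> simp only <;> ring
          simp only at this ⊢
          rw [e]
          exact this
        _ = _ := by simp; field_simp

theorem exists_ulim {α : Type*} (U : Ultrafilter α) {f : α → ℝ} (h0 : ∀ i, 0 ≤ f i)
    (h1 : ∀ i, f i ≤ 1) : ∃ L, Tendsto f U (𝓝 L) := by
  obtain ⟨x, -, hx⟩ := (isCompact_Icc (a := (0:ℝ)) (b := 1)).ultrafilter_le_nhds' (U.map f)
    (Filter.mem_map.2 (Filter.univ_mem' fun i => ⟨h0 i, h1 i⟩))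
  exact ⟨x, hx⟩

theorem GoodFn.exists_inv {K : Type u} [Field K] {q : K} {a : ℝ} {φ : K × K → ℝ}
    (h : GoodFn q a φ) :
    ∃ ψ, GoodFn q a ψ ∧ ∀ t, t ≠ 0 → ∀ x y : K, ψ (t * x, t⁻¹ * y) = ψ (x, y) := by
  choose ψ hψ hinv using fun i : ℕ × Finset K => h.approx_inv i.1 i.2
  let U : Ultrafilter (ℕ × Finset K) := Ultrafilter.of atTop
  have hU : (U : Filter (ℕ × Finset K)) ≤ atTop := Ultrafilter.of_le _
  choose Φ hΦ using fun p => exists_ulim U (f := fun i => ψ i p) (fun i => (hψ i).nonneg p)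
    (fun i => (hψ i).le_one p)
  refine ⟨Φ, GoodFn.of_tendsto hψ hΦ, fun t ht x y => ?_⟩
  have h1 : Tendsto (fun i => ψ i (t * x, t⁻¹ * y) - ψ i (x, y)) U
      (𝓝 (Φ (t * x, t⁻¹ * y) - Φ (x, y))) := (hΦ _).sub (hΦ _)
  have h2 : Tendsto (fun i => ψ i (t * x, t⁻¹ * y) - ψ i (x, y)) U (𝓝 0) := by
    have h3 : Tendsto (fun i : ℕ × Finset K => 1 / ((i.1 : ℝ) + 1)) U (𝓝 0) := by
      refine Tendsto.comp (g := fun n : ℕ => 1 / ((n : ℝ) + 1)) tendsto_one_div_add_atTop_nhds_zero_nat (Tendsto.mono_left ?_ hU)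
      rw [← prod_atTop_atTop_eq]; exact tendsto_fst
    refine squeeze_zero_norm' ?_ h3
    filter_upwards [hU (Filter.Ici_mem_atTop ((0, {t}) : ℕ × Finset K))] with i hi
    exact hinv i t (hi.2 (Finset.mem_singleton_self t)) ht (x, y)
  exact sub_eq_zero.1 (tendsto_nhds_unique h1 h2)

theorem finite_quad {K : Type u} [Field K] {A B C : K} (h : A ≠ 0 ∨ B ≠ 0 ∨ C ≠ 0) :
    {t : K | A * t ^ 2 + B * t + C = 0}.Finite := by
  have hp : (Polynomial.C A * Polynomial.X ^ 2 + Polynomial.C B * Polynomial.X + Polynomial.C C)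
      ≠ 0 := by
    intro h0
    have h2 := congrArg (fun p => Polynomial.coeff p 2) h0
    have h1 := congrArg (fun p => Polynomial.coeff p 1) h0
    have h00 := congrArg (fun p => Polynomial.coeff p 0) h0
    simp [Polynomial.coeff_X, Polynomial.coeff_C, Polynomial.coeff_X_pow] at h2 h1 h00
    tauto
  refine (Polynomial.finite_setOfPred_isRoot hp).subset fun t ht => ?_
  simpa [Polynomial.IsRoot] using ht

theorem tendsto_hyp {K : Type u} [Field K] {A B q : K} (hq : q ≠ 0) (h : A ≠ 0 ∨ B ≠ 0) :
    Tendsto (fun t => (A + t) * (B + q / t)) cofinite cofinite := by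
  refine Filter.Tendsto.cofinite_of_finite_preimage_singleton fun s => ?_
  have := (finite_quad (A := B) (B := A * B + q - s) (C := q * A) (by
    rcases h with h | h
    · right; right; exact mul_ne_zero hq h
    · left; exact h)).insert 0
  refine (this.subset fun t ht => ?_).to_subtype
  by_cases h0 : t = 0
  · left; exact h0
  · right
    simp only [Set.mem_preimage, Set.mem_singleton_iff] at ht
    simp only [Set.mem_ofPred_eq]
    field_simp at ht
    linear_combination ht

theorem tendsto_sq {K : Type u} [Field K] (A B : K) :
    Tendsto (fun t => (A + t) * (B + t)) cofinite cofinite := by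
  refine Filter.Tendsto.cofinite_of_finite_preimage_singleton fun s => ?_
  have := (finite_quad (A := (1:K)) (B := A + B) (C := A * B - s) (Or.inl one_ne_zero))
  refine (this.subset fun t ht => ?_).to_subtype
  simp only [Set.mem_preimage, Set.mem_singleton_iff] at ht
  simp only [Set.mem_ofPred_eq]
  linear_combination ht

theorem GoodFn.bessel {K : Type u} [Field K] {q : K} {a : ℝ} {φ : K × K → ℝ} (ha : 0 < a)
    (h : GoodFn q a φ) (hinv : ∀ t, t ≠ 0 → ∀ x y : K, φ (t * x, t⁻¹ * y) = φ (x, y))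
    (X : Finset K) (w : K → ℝ) (l : ℝ) :
    0 ≤ φ (1, 0) * (∑ x ∈ X, w x) ^ 2 + (φ 0 - φ (1, 0)) * ∑ x ∈ X, w x ^ 2
      + 2 * l * ∑ x ∈ X, w x * φ (x, 1) + l ^ 2 * φ 0 := by
  have key := h.psd (Option K) (Finset.insertNone X)
    (fun o => o.elim (0, -1) (fun x => (x, 0))) (fun o => o.elim l w)
  have h0 : 0 ≤ a * (∑ i ∈ Finset.insertNone X, (fun o : Option K => o.elim l w) i) ^ 2 := by
    positivity
  have e1 : ∀ x y : K, φ (x - y, 0) = φ (1, 0) + if x = y then φ 0 - φ (1, 0) else 0 := by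
    intro x y
    split_ifs with hxy
    · subst hxy; simp; rfl
    · have := hinv (x - y) (sub_ne_zero.2 hxy) 1 0
      simpa using this
  have e2 : ∀ x : K, φ (-x, -1) = φ (x, 1) := fun x => by
    rw [← h.symm (x, 1)]; rfl
  have key := h0.trans key
  simp only [Finset.sum_insertNone, Option.elim] at key
  simp only [Prod.mk_sub_mk, sub_self, zero_sub, sub_zero, sub_neg_eq_add, zero_add, e1, e2,
    mul_add, Finset.sum_add_distrib, mul_ite, mul_zero, Finset.sum_ite_eq] at key
  have e4 : ∑ x ∈ X, (if x ∈ X then w x * w x * (φ 0 - φ (1, 0)) else 0)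
      = (φ 0 - φ (1, 0)) * ∑ x ∈ X, w x ^ 2 := by
    rw [Finset.mul_sum]; refine Finset.sum_congr rfl fun x hx => ?_
    rw [if_pos hx]; ring
  have e5 : ∑ x ∈ X, ∑ y ∈ X, w x * w y * φ (1, 0) = φ (1, 0) * (∑ x ∈ X, w x) ^ 2 := by
    rw [sq, Finset.sum_mul_sum, Finset.mul_sum]
    refine Finset.sum_congr rfl fun x hx => ?_
    rw [Finset.mul_sum]
    refine Finset.sum_congr rfl fun y hx => ?_
    ring
  have e6 : ∑ x ∈ X, l * w x * φ (x, 1) = l * ∑ x ∈ X, w x * φ (x, 1) := by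
    rw [Finset.mul_sum]; refine Finset.sum_congr rfl fun x hx => ?_
    ring
  have e7 : ∑ x ∈ X, w x * l * φ (x, 1) = l * ∑ x ∈ X, w x * φ (x, 1) := by
    rw [Finset.mul_sum]; refine Finset.sum_congr rfl fun x hx => ?_
    ring
  rw [e4, e5, e6, e7] at key
  linarith

theorem GoodFn.exists_lim {K : Type u} [Field K] {q : K} {a : ℝ} {φ : K × K → ℝ} (ha : 0 < a)
    (h : GoodFn q a φ) (hinv : ∀ t, t ≠ 0 → ∀ x y : K, φ (t * x, t⁻¹ * y) = φ (x, y)) :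
    ∃ L, Tendsto (fun x => φ (x, 1)) cofinite (𝓝 L) := by
  refine tendsto_of_no_upcrossings dense_univ ?_
    ⟨1, by simp [h.le_one]⟩ ⟨0, by simp [h.nonneg]⟩
  rintro α - β - hαβ ⟨h1, h2⟩
  rw [Filter.frequently_cofinite_iff_infinite] at h1 h2
  obtain ⟨n, hn⟩ := exists_nat_gt (2 / (β - α) ^ 2)
  have hη : 0 < β - α := sub_pos.2 hαβ
  obtain ⟨X, hX, hXn⟩ := h1.exists_subset_card_eq n
  obtain ⟨Y, hY, hYn⟩ := h2.exists_subset_card_eq n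
  have hd : Disjoint X Y := by
    rw [Finset.disjoint_left]
    intro x hx hy
    have a1 : φ (x, 1) < α := hX hx
    have a2 : β < φ (x, 1) := hY hy
    linarith
  have key := h.bessel ha hinv (X ∪ Y) (fun x => if x ∈ X then 1 else -1) (n * (β - α))
  simp only [Finset.sum_union hd] at key
  have c1 : ∀ F : K → ℝ, ∀ G : K → ℝ, ∑ x ∈ X, (if x ∈ X then F x else G x) = ∑ x ∈ X, F x :=
    fun F G => Finset.sum_congr rfl fun x hx => if_pos hx
  have c2 : ∀ F : K → ℝ, ∀ G : K → ℝ, ∑ x ∈ Y, (if x ∈ X then F x else G x) = ∑ x ∈ Y, G x :=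
    fun F G => Finset.sum_congr rfl fun x hx => if_neg (Finset.disjoint_right.1 hd hx)
  simp only [ite_pow, ite_mul, c1, c2] at key
  have s1 : ∑ x ∈ X, 1 * φ (x, 1) ≤ n * α := by
    calc _ ≤ ∑ x ∈ X, α := Finset.sum_le_sum fun x hx => by
          have : φ (x, 1) < α := hX hx
          linarith
      _ = _ := by simp [hXn]
  have s2 : ∑ x ∈ Y, -1 * φ (x, 1) ≤ n * (-β) := by
    calc _ ≤ ∑ x ∈ Y, -β := Finset.sum_le_sum fun x hx => by
          have : β < φ (x, 1) := hY hx
          linarith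
      _ = _ := by simp [hYn]
  simp only [Finset.sum_const, hXn, hYn] at key
  simp at key
  rw [div_lt_iff₀ (by positivity)] at hn
  have hn0 : (0:ℝ) < n := by
    rcases Nat.eq_zero_or_pos n with rfl | h'
    · simp at hn; linarith
    · exact_mod_cast h'
  simp only [one_mul, neg_mul, Finset.sum_neg_distrib] at s1 s2
  have p1 := h.le_one 0
  have p2 := h.nonneg (1, 0)
  have p3 : 2 * (n * (β - α)) * (∑ x ∈ X, φ (x, 1) + -∑ x ∈ Y, φ (x, 1))
      ≤ 2 * (n * (β - α)) * (n * α + n * (-β)) := by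
    gcongr
  have p4 : (n * (β - α)) ^ 2 * φ 0 ≤ (n * (β - α)) ^ 2 * 1 := by gcongr
  have p5 : (φ 0 - φ (1, 0)) * (n + n) ≤ 1 * (n + n) := by gcongr; linarith
  have p6 : (n:ℝ) * 2 < n * (n * (β - α) ^ 2) := by gcongr
  nlinarith

theorem GoodFn.eq_mul {K : Type u} [Field K] {φ : K × K → ℝ}
    (hinv : ∀ t, t ≠ 0 → ∀ x y : K, φ (t * x, t⁻¹ * y) = φ (x, y)) (x y : K) (hy : y ≠ 0) :
    φ (x, y) = φ (x * y, 1) := by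
  rw [← hinv y hy x y, inv_mul_cancel₀ hy, mul_comm]

theorem GoodFn.lower {K : Type u} [Field K] [Infinite K] {q : K} {a : ℝ} {φ : K × K → ℝ}
    (ha : 0 < a) (h : GoodFn q a φ)
    (hinv : ∀ t, t ≠ 0 → ∀ x y : K, φ (t * x, t⁻¹ * y) = φ (x, y))
    {L : ℝ} (hL : Tendsto (fun x => φ (x, 1)) cofinite (𝓝 L)) (P : Finset (K × K)) :
    (P.card : ℝ) ^ 2 * L ≤ ∑ x ∈ P, ∑ y ∈ P, φ (x - y) := by
  have h1 : ∀ z : K × K, ∑ x ∈ P, ∑ y ∈ P, φ (x - y + z) ≤ ∑ x ∈ P, ∑ y ∈ P, φ (x - y) := by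
    intro z
    have key := h.psd ((K × K) ⊕ (K × K)) (P.disjSum P) (Sum.elim id (fun x => x + z))
      (Sum.elim (fun _ => 1) (fun _ => -1))
    have key := le_trans (by positivity) key
    simp only [Finset.sum_disjSum, Sum.elim_inl, Sum.elim_inr, id, Finset.sum_add_distrib] at key
    have e1 : ∑ x ∈ P, ∑ y ∈ P, 1 * -1 * φ (x - (y + z)) = - ∑ x ∈ P, ∑ y ∈ P, φ (x - y + z) := by
      rw [Finset.sum_comm]
      simp only [← Finset.sum_neg_distrib]
      refine Finset.sum_congr rfl fun x _ => Finset.sum_congr rfl fun y _ => ?_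
      rw [← h.symm (y - (x + z)), neg_sub, sub_add_eq_add_sub]; ring
    have e2 : ∑ x ∈ P, ∑ y ∈ P, -1 * 1 * φ (x + z - y) = - ∑ x ∈ P, ∑ y ∈ P, φ (x - y + z) := by
      simp only [← Finset.sum_neg_distrib]
      refine Finset.sum_congr rfl fun x _ => Finset.sum_congr rfl fun y _ => ?_
      rw [sub_add_eq_add_sub]; ring
    simp only [add_sub_add_right_eq_sub] at key
    rw [e1, e2] at key
    norm_num at key
    linarith
  have h2 : Tendsto (fun t : K => ∑ x ∈ P, ∑ y ∈ P, φ (x - y + (t, t))) cofinite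
      (𝓝 (∑ x ∈ P, ∑ y ∈ P, L)) := by
    refine tendsto_finsetSum _ fun x _ => tendsto_finsetSum _ fun y _ => ?_
    have := hL.comp (tendsto_sq (x - y).1 (x - y).2)
    refine this.congr' ?_
    filter_upwards [(Set.finite_singleton (-(x - y).2)).compl_mem_cofinite] with t ht
    have ht' : (x - y).2 + t ≠ 0 := fun h0 => ht (eq_neg_of_add_eq_zero_right h0)
    exact (GoodFn.eq_mul hinv _ _ ht').symm
  have h3 := le_of_tendsto' h2 fun t => h1 (t, t)
  simp only [Finset.sum_const, nsmul_eq_mul] at h3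
  linarith

theorem GoodFn.double {K : Type u} [Field K] [Infinite K] {q : K} (hq : q ≠ 0) {a : ℝ}
    {φ : K × K → ℝ} (h : GoodFn q a φ)
    (hinv : ∀ t, t ≠ 0 → ∀ x y : K, φ (t * x, t⁻¹ * y) = φ (x, y))
    {L : ℝ} (hL : Tendsto (fun x => φ (x, 1)) cofinite (𝓝 L)) {ε : ℝ} (hε : 0 < ε)
    (P : Finset (K × K)) :
    ∃ P' : Finset (K × K), P'.card = 2 * P.card ∧ ∑ x ∈ P', ∑ y ∈ P', φ (x - y) ≤
      2 * ∑ x ∈ P, ∑ y ∈ P, φ (x - y) + 2 * ((P.card : ℝ) ^ 2 - P.card) * (L + ε) := by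
  have h1 : ∀ᶠ t in cofinite, ∀ x ∈ P, ∀ y ∈ P, x ≠ y → φ (x - y + (t, q / t)) ≤ L + ε := by
    rw [Filter.eventually_all_finset]
    intro x _
    rw [Filter.eventually_all_finset]
    intro y _
    by_cases hxy : x = y
    · simp [hxy]
    have hne : (x - y).1 ≠ 0 ∨ (x - y).2 ≠ 0 := by
      by_contra! h0
      exact hxy (sub_eq_zero.1 (Prod.ext h0.1 h0.2))
    have := hL.comp (tendsto_hyp hq hne)
    have h2 := this.eventually (ge_mem_nhds (lt_add_of_pos_right L hε))
    filter_upwards [h2, (finite_quad (A := 0) (B := (x - y).2) (C := q)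
      (Or.inr (Or.inr hq))).compl_mem_cofinite,
      (Set.finite_singleton (0 : K)).compl_mem_cofinite] with t ht ht1 ht2 _
    have ht2 : t ≠ 0 := ht2
    have ht' : (x - y).2 + q / t ≠ 0 := by
      intro h0
      apply ht1
      have : ((x - y).2 + q / t) * t = 0 := by rw [h0, zero_mul]
      rw [add_mul, div_mul_cancel₀ _ ht2] at this
      simpa using this
    have e := GoodFn.eq_mul hinv ((x - y).1 + t) _ ht'
    exact e.trans_le ht
  have h2 : ∀ᶠ t in cofinite, ∀ x ∈ P, ∀ y ∈ P, x + (t, q / t) ≠ y := by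
    rw [Filter.eventually_all_finset]
    intro x _
    rw [Filter.eventually_all_finset]
    intro y _
    filter_upwards [(Set.finite_singleton (y.1 - x.1)).compl_mem_cofinite] with t ht h0
    apply ht
    rw [← h0]; simp
  obtain ⟨t, ⟨ht1, ht2⟩, ht0⟩ := ((h1.and h2).and
    (Set.finite_singleton (0 : K)).compl_mem_cofinite).exists
  have ht0 : t ≠ 0 := ht0
  set z : K × K := (t, q / t) with hz
  have hd : Disjoint P (P.map (addRightEmbedding z)) := by
    rw [Finset.disjoint_left]
    intro y hy hy'
    obtain ⟨x, hx, hxy⟩ := Finset.mem_map.1 hy'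
    exact ht2 x hx y hy hxy
  refine ⟨P ∪ P.map (addRightEmbedding z), ?_, ?_⟩
  · rw [Finset.card_union_of_disjoint hd, Finset.card_map, two_mul]
  simp only [Finset.sum_union hd, Finset.sum_map, addRightEmbedding_apply,
    Finset.sum_add_distrib, add_sub_add_right_eq_sub]
  have e1 : ∑ x ∈ P, ∑ y ∈ P, φ (x - (y + z)) = ∑ x ∈ P, ∑ y ∈ P, φ (x - y + z) := by
    rw [Finset.sum_comm]
    refine Finset.sum_congr rfl fun x _ => Finset.sum_congr rfl fun y _ => ?_
    rw [← h.symm (y - (x + z)), neg_sub, sub_add_eq_add_sub]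
  have e2 : ∑ x ∈ P, ∑ y ∈ P, φ (x + z - y) = ∑ x ∈ P, ∑ y ∈ P, φ (x - y + z) := by
    refine Finset.sum_congr rfl fun x _ => Finset.sum_congr rfl fun y _ => ?_
    rw [sub_add_eq_add_sub]
  have e3 : ∑ x ∈ P, ∑ y ∈ P, φ (x - y + z) ≤ ((P.card : ℝ) ^ 2 - P.card) * (L + ε) := by
    calc _ ≤ ∑ x ∈ P, ∑ y ∈ P, ((L + ε) - if x = y then L + ε else 0) := by
          refine Finset.sum_le_sum fun x hx => Finset.sum_le_sum fun y hy => ?_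
          split_ifs with hxy
          · rw [hxy, sub_self, sub_self, zero_add, hz, h.zero t ht0]
          · rw [sub_zero]; exact ht1 x hx y hy hxy
      _ = _ := by
          simp [Finset.sum_sub_distrib]
          ring
  rw [e1, e2]
  linarith

theorem no_good {K : Type u} [Field K] [Infinite K] {q : K} (hq : q ≠ 0) {a : ℝ}
    (ha : 0 < a) {φ : K × K → ℝ} (h : GoodFn q a φ)
    (hinv : ∀ t, t ≠ 0 → ∀ x y : K, φ (t * x, t⁻¹ * y) = φ (x, y)) : False := by
  obtain ⟨L, hL⟩ := h.exists_lim ha hinv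
  have hL0 : 0 ≤ L := ge_of_tendsto' hL fun x => h.nonneg _
  have main : ∀ ε : ℝ, 0 < ε → ∀ d : ℕ, ∃ P : Finset (K × K), P.card = 2 ^ d ∧
      ∑ x ∈ P, ∑ y ∈ P, φ (x - y) ≤ ((2:ℝ) ^ d) ^ 2 * (L + ε) + 2 ^ d * (1 - d * L) := by
    intro ε hε d
    induction d with
    | zero =>
      refine ⟨{0}, by simp, ?_⟩
      have := h.le_one 0
      simp
      linarith
    | succ d ih =>
      obtain ⟨P, hP, hS⟩ := ih
      obtain ⟨P', hP', hS'⟩ := h.double hq hinv hL hε P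
      refine ⟨P', by rw [hP', hP, pow_succ, mul_comm], hS'.trans ?_⟩
      rw [hP]
      push_cast
      have : (0:ℝ) < 2 ^ d * ε := by positivity
      rw [pow_succ (2:ℝ) d]
      nlinarith
  have hle : ∀ d : ℕ, d * L ≤ 1 := by
    intro d
    refine le_of_forall_pos_le_add fun ε hε => ?_
    obtain ⟨P, hP, hS⟩ := main (ε / 2 ^ d) (by positivity) d
    have hlow := (h.lower ha hinv hL P).trans hS
    rw [hP] at hlow
    push_cast at hlow
    have h2 : (0:ℝ) < 2 ^ d := by positivity
    have e : ((2:ℝ) ^ d) ^ 2 * (L + ε / 2 ^ d) = ((2:ℝ) ^ d) ^ 2 * L + 2 ^ d * ε := by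
      field_simp
    rw [e] at hlow
    have : 0 ≤ (2:ℝ) ^ d * (ε + 1 - d * L) := by linarith
    have := nonneg_of_mul_nonneg_right this h2
    linarith
  have hL1 : L = 0 := by
    by_contra hne
    have hpos : 0 < L := lt_of_le_of_ne hL0 (Ne.symm hne)
    obtain ⟨d, hd⟩ := exists_nat_gt (1 / L)
    rw [div_lt_iff₀ hpos] at hd
    linarith [hle d]
  subst hL1
  obtain ⟨d, hd⟩ := exists_nat_gt (2 / a)
  obtain ⟨P, hP, hS⟩ := main (a / 2) (by positivity) d
  have hp := h.psd (K × K) P id (fun _ => 1)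
  simp only [id, one_mul, Finset.sum_const, nsmul_eq_mul, mul_one, hP] at hp
  have hp := hp.trans hS
  push_cast at hp
  have h2 : (d:ℝ) < 2 ^ d := by exact_mod_cast Nat.lt_two_pow_self
  have h3 : (2:ℝ) < 2 ^ d * a := by
    rw [div_lt_iff₀ ha] at hd
    nlinarith
  have h4 : (0:ℝ) < 2 ^ d := by positivity
  nlinarith

theorem avg_shift {A : Type*} [AddCommGroup A] {F : ℕ → Finset A} (hF : IsAddFolner F)
    {g : A → ℝ} (h0 : ∀ x, 0 ≤ g x) (h1 : ∀ x, g x ≤ 1) (a : A) :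
    Tendsto (fun n => (∑ x ∈ F n, g (x + a)) / ((F n).card : ℝ) - (∑ x ∈ F n, g x) / (F n).card)
      atTop (𝓝 0) := by
  have h2 : Tendsto (fun n => 1 - ((F n ∩ (F n).image (· + a)).card : ℝ) / ((F n).card : ℝ))
      atTop (𝓝 0) := by
    simpa using (hF.2 a).const_sub 1
  refine squeeze_zero_norm (fun n => ?_) h2
  have hc : (0 : ℝ) < (F n).card := by exact_mod_cast (hF.1 n).card_pos
  rw [← sub_div, Real.norm_eq_abs, abs_div, abs_of_pos hc, div_le_iff₀ hc, sub_mul,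
    div_mul_cancel₀ _ hc.ne', one_mul]
  have e : ∑ x ∈ F n, g (x + a) = ∑ x ∈ (F n).image (· + a), g x := by
    rw [Finset.sum_image]
    intro x _ y _ hxy
    exact add_right_cancel hxy
  have hG : ((F n).image (· + a)).card = (F n).card :=
    Finset.card_image_of_injective _ (add_left_injective a)
  rw [e]
  generalize (F n).image (· + a) = G at hG
  have i1 := Finset.sum_inter_add_sum_sdiff (F n) G g
  have i2 := Finset.sum_inter_add_sum_sdiff G (F n) g
  rw [Finset.inter_comm G] at i2
  have c1 : (((F n) ∩ G).card : ℝ) + ((F n) \ G).card = (F n).card := by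
    exact_mod_cast Finset.card_inter_add_card_sdiff (F n) G
  have c2 : (((F n) ∩ G).card : ℝ) + (G \ (F n)).card = (F n).card := by
    rw [← hG, Finset.inter_comm]
    exact_mod_cast Finset.card_inter_add_card_sdiff G (F n)
  have b : ∀ s : Finset A, 0 ≤ ∑ x ∈ s, g x ∧ ∑ x ∈ s, g x ≤ s.card := fun s =>
    ⟨Finset.sum_nonneg fun x _ => h0 x, by
      calc _ ≤ ∑ x ∈ s, (1:ℝ) := Finset.sum_le_sum fun x _ => h1 x
        _ = _ := by simp⟩
  have b1 := b (F n \ G)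
  have b2 := b (G \ F n)
  rw [abs_le]
  constructor <;> linarith [b1.1, b1.2, b2.1, b2.2]

theorem recur {K : Type u} [Field K] [Infinite K] {F : ℕ → Finset (K × K)} (hF : IsAddFolner F)
    (U : Ultrafilter ℕ) (hU : (U : Filter ℕ) ≤ atTop) (D : Set (K × K)) {δ : ℝ} (hδ : 0 < δ)
    (hD : ∀ᶠ n in (U : Filter ℕ), δ ≤ (((F n).filter (· ∈ D)).card : ℝ) / ((F n).card : ℝ))
    {q : K} (hq : q ≠ 0) : ∃ u ∈ D, ∃ v ∈ D, (v - u).1 * (v - u).2 = q := by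
  by_contra! hno
  let b : K × K → ℝ := fun x => if x ∈ D then 1 else 0
  have b0 : ∀ x, 0 ≤ b x := fun x => by simp only [b]; split_ifs <;> simp
  have b1 : ∀ x, b x ≤ 1 := fun x => by simp only [b]; split_ifs <;> simp
  have hc : ∀ n, (0 : ℝ) < (F n).card := fun n => by exact_mod_cast (hF.1 n).card_pos
  have av0 : ∀ g : K × K → ℝ, (∀ x, 0 ≤ g x) → ∀ n, 0 ≤ (∑ x ∈ F n, g x) / ((F n).card : ℝ) :=
    fun g hg n => div_nonneg (Finset.sum_nonneg fun x _ => hg x) (hc n).le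
  have av1 : ∀ g : K × K → ℝ, (∀ x, g x ≤ 1) → ∀ n, (∑ x ∈ F n, g x) / ((F n).card : ℝ) ≤ 1 := by
    intro g hg n
    rw [div_le_one (hc n)]
    calc _ ≤ ∑ x ∈ F n, (1:ℝ) := Finset.sum_le_sum fun x _ => hg x
      _ = _ := by simp
  have shift : ∀ g : K × K → ℝ, (∀ x, 0 ≤ g x) → (∀ x, g x ≤ 1) → ∀ l : ℝ,
      Tendsto (fun n => (∑ x ∈ F n, g x) / ((F n).card : ℝ)) U (𝓝 l) → ∀ a : K × K,
      Tendsto (fun n => (∑ x ∈ F n, g (x + a)) / ((F n).card : ℝ)) U (𝓝 l) := by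
    intro g g0 g1 l hl a
    simpa using ((avg_shift hF g0 g1 a).mono_left hU).add hl
  obtain ⟨β, hβ⟩ := exists_ulim U (av0 b b0) (av1 b b1)
  have hβpos : 0 < β := by
    refine hδ.trans_le (ge_of_tendsto hβ ?_)
    filter_upwards [hD] with n hn
    simpa [b] using hn
  have bb0 : ∀ p x, 0 ≤ b x * b (x + p) := fun p x => mul_nonneg (b0 _) (b0 _)
  have bb1 : ∀ p x, b x * b (x + p) ≤ 1 := fun p x => mul_le_one₀ (b1 _) (b0 _) (b1 _)
  choose φ hφ using fun p : K × K => exists_ulim U (av0 _ (bb0 p)) (av1 _ (bb1 p))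
  have hφ2 : ∀ p p' : K × K, Tendsto (fun n => (∑ x ∈ F n, b (x + p) * b (x + p')) /
      ((F n).card : ℝ)) U (𝓝 (φ (p' - p))) := by
    intro p p'
    have := shift _ (bb0 (p' - p)) (bb1 (p' - p)) _ (hφ (p' - p)) p
    simpa [add_assoc] using this
  have good : GoodFn q (β ^ 2) φ := by
    refine ⟨fun p => ge_of_tendsto' (hφ p) (av0 _ (bb0 p)),
      fun p => le_of_tendsto' (hφ p) (av1 _ (bb1 p)), fun p => ?_, ?_, ?_⟩
    · have h1 := hφ2 p 0
      have h2 := hφ2 0 p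
      rw [zero_sub] at h1
      rw [sub_zero] at h2
      refine tendsto_nhds_unique h1 ?_
      simpa only [mul_comm] using h2
    · intro ι s p w
      have h1 : Tendsto (fun n => (∑ i ∈ s, w i * ((∑ x ∈ F n, b (x + p i)) / ((F n).card : ℝ))) ^ 2)
          U (𝓝 ((∑ i ∈ s, w i * β) ^ 2)) :=
        (tendsto_finsetSum _ fun i _ => (shift b b0 b1 β hβ (p i)).const_mul _).pow 2
      have h2 : Tendsto (fun n => ∑ i ∈ s, ∑ j ∈ s, w i * w j *
          ((∑ x ∈ F n, b (x + p j) * b (x + p i)) / ((F n).card : ℝ))) U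
          (𝓝 (∑ i ∈ s, ∑ j ∈ s, w i * w j * φ (p i - p j))) :=
        tendsto_finsetSum _ fun i _ => tendsto_finsetSum _ fun j _ => (hφ2 _ _).const_mul _
      have h3 := le_of_tendsto_of_tendsto' h1 h2 fun n => ?_
      · rw [← Finset.sum_mul] at h3
        calc _ = ((∑ i ∈ s, w i) * β) ^ 2 := by ring
          _ ≤ _ := h3
      · have e1 : ∑ i ∈ s, w i * ((∑ x ∈ F n, b (x + p i)) / ((F n).card : ℝ))
            = (∑ x ∈ F n, ∑ i ∈ s, w i * b (x + p i)) / (F n).card := by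
          rw [Finset.sum_comm, Finset.sum_div]
          refine Finset.sum_congr rfl fun i _ => ?_
          rw [← Finset.mul_sum, mul_div_assoc]
        have e2 : ∑ i ∈ s, ∑ j ∈ s, w i * w j *
            ((∑ x ∈ F n, b (x + p j) * b (x + p i)) / ((F n).card : ℝ))
            = (∑ x ∈ F n, (∑ i ∈ s, w i * b (x + p i)) ^ 2) / (F n).card := by
          simp only [sq, Finset.sum_mul_sum]
          conv_rhs => rw [Finset.sum_comm, Finset.sum_div]
          refine Finset.sum_congr rfl fun i _ => ?_
          conv_rhs => rw [Finset.sum_comm, Finset.sum_div]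
          refine Finset.sum_congr rfl fun j _ => ?_
          rw [← mul_div_assoc, Finset.mul_sum]
          congr 1
          refine Finset.sum_congr rfl fun x _ => ?_
          ring
        rw [e1, e2, div_pow, sq ((F n).card : ℝ), ← div_div]
        have hc' := hc n
        gcongr
        rw [div_le_iff₀ hc', mul_comm]
        exact sq_sum_le_card_mul_sum_sq
    · intro t ht
      refine tendsto_nhds_unique (hφ (t, q / t)) ?_
      have : ∀ x, b x * b (x + (t, q / t)) = 0 := by
        intro x
        simp only [b]
        split_ifs with hx hy
        · exfalso
          apply hno x hx _ hy
          simp [mul_div_cancel₀ _ ht]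
        all_goals simp
      simp [this]
  obtain ⟨ψ, hψ, hinv⟩ := good.exists_inv
  exact no_good hq (by positivity) hψ hinv

/-- For a set `E ⊆ K²` of positive upper Banach density, `Prod(E − E) = K`, and for every
finite `Q ⊆ K` there is a pin `u_Q ∈ E` with `Q ⊆ Prod(E − u_Q)`. -/
theorem statement10
    {K : Type*} [Field K] [Countable K] [Infinite K]
    (E : Set (K × K)) (hE : PosUpperBanachDensity E) :
    (fun p : K × K => p.1 * p.2) '' (E - E) = Set.univ ∧
      ∀ Q : Finset K, ∃ u ∈ E,
        (Q : Set K) ⊆ (fun p : K × K => p.1 * p.2) '' ((fun x => x - u) '' E) := by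
  have main : ∀ Q : Finset K, ∃ u ∈ E,
        (Q : Set K) ⊆ (fun p : K × K => p.1 * p.2) '' ((fun x => x - u) '' E) := by
    intro Q
    by_contra! hno
    obtain ⟨F, hF, hlim⟩ := hE
    have hc : ∀ n, (0 : ℝ) < (F n).card := fun n => by exact_mod_cast (hF.1 n).card_pos
    obtain ⟨δ, hδ, hlt⟩ := exists_between hlim
    have hfreq := Filter.frequently_lt_of_lt_limsup
      (IsBoundedUnder.isCoboundedUnder_le ⟨0, by
        simp only [Filter.eventually_map]
        exact Filter.Eventually.of_forall fun n => by positivity⟩) hlt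
    have hne := Filter.frequently_iff_neBot.1 hfreq
    let U := Ultrafilter.of (atTop ⊓ 𝓟 {n | δ < (((F n).filter (· ∈ E)).card : ℝ) / ((F n).card : ℝ)})
    have hU := Ultrafilter.of_le
      (atTop ⊓ 𝓟 {n | δ < (((F n).filter (· ∈ E)).card : ℝ) / ((F n).card : ℝ)})
    have hU1 : (U : Filter ℕ) ≤ atTop := hU.trans inf_le_left
    have hU2 : ∀ᶠ n in (U : Filter ℕ), δ < (((F n).filter (· ∈ E)).card : ℝ) / ((F n).card : ℝ) :=
      Filter.le_principal_iff.1 (hU.trans inf_le_right)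
    let D : K → Set (K × K) := fun q => {u | u ∈ E ∧ ∀ v ∈ E, (v - u).1 * (v - u).2 ≠ q}
    have hcov : ∀ u ∈ E, ∃ q ∈ Q, u ∈ D q := by
      intro u hu
      obtain ⟨q, hq, hq'⟩ := Set.not_subset.1 (hno u hu)
      refine ⟨q, hq, hu, fun v hv h => hq' ⟨_, ⟨v, hv, rfl⟩, h⟩⟩
    have hsmall : ∀ q ∈ Q, ∀ᶠ n in (U : Filter ℕ),
        (((F n).filter (· ∈ D q)).card : ℝ) / ((F n).card : ℝ) < δ / (Q.card + 1) := by
      intro q _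
      by_contra hcon
      rw [← Ultrafilter.eventually_not] at hcon
      have hq0 : q ≠ 0 := by
        rintro rfl
        have : D 0 = ∅ := by
          ext u
          simp only [D, Set.mem_ofPred_eq, Set.mem_empty_iff_false, iff_false]
          rintro ⟨hu, h⟩
          exact h u hu (by simp)
        simp only [this] at hcon
        obtain ⟨n, hn⟩ := hcon.exists
        apply hn
        simp
        positivity
      obtain ⟨u, hu, v, hv, huv⟩ := recur hF U hU1 (D q) (δ := δ / (Q.card + 1)) (by positivity)
        (by filter_upwards [hcon] with n hn; have hn := not_lt.1 hn; refine hn.trans_eq ?_; congr) hq0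
      exact hu.2 v hv.1 huv
    obtain ⟨n, hn1, hn2⟩ := (hU2.and ((Filter.eventually_all_finset Q).2 hsmall)).exists
    have hsub : (F n).filter (· ∈ E) ⊆ Q.biUnion fun q => (F n).filter (· ∈ D q) := by
      intro u hu
      rw [Finset.mem_filter] at hu
      obtain ⟨q, hq, hq'⟩ := hcov u hu.2
      exact Finset.mem_biUnion.2 ⟨q, hq, Finset.mem_filter.2 ⟨hu.1, hq'⟩⟩
    have hcard : (((F n).filter (· ∈ E)).card : ℝ) ≤ ∑ q ∈ Q, (((F n).filter (· ∈ D q)).card : ℝ) := by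
      exact_mod_cast (Finset.card_le_card hsub).trans Finset.card_biUnion_le
    have : (((F n).filter (· ∈ E)).card : ℝ) / (F n).card ≤ δ := by
      calc _ ≤ (∑ q ∈ Q, (((F n).filter (· ∈ D q)).card : ℝ)) / (F n).card := by
            have := (hc n).le
            gcongr
        _ = ∑ q ∈ Q, (((F n).filter (· ∈ D q)).card : ℝ) / (F n).card := Finset.sum_div _ _ _
        _ ≤ ∑ q ∈ Q, δ / (Q.card + 1) := Finset.sum_le_sum fun q hq => (hn2 q hq).le
        _ = Q.card * δ / (Q.card + 1) := by simp [mul_div_assoc]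
        _ ≤ δ := by
            rw [div_le_iff₀ (by positivity)]
            nlinarith
    linarith
  refine ⟨Set.eq_univ_of_forall fun q => ?_, main⟩
  obtain ⟨u, hu, hQ⟩ := main {q}
  obtain ⟨_, ⟨v, hv, rfl⟩, h⟩ := hQ (show q ∈ (({q} : Finset K) : Set K) by simp)
  exact ⟨v - u, Set.sub_mem_sub hv hu, h⟩
end
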